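/- For every N ≥ 1 and every n ∈ ℕ, the following are equivalent: (1) there exists an ℝ-linear map f : ℝⁿ → M(N,ℍ) such that every f(v) is quaternionic Hermitian (f(v)ᴴ = f(v)) and f(v)² = ‖v‖² I_N for all v ∈ ℝⁿ; (2) there exists an ℝ-linear map f : ℝⁿ → M(N,ℍ) with every f(v) quaternionic Hermitian and f(v) invertible for every nonzero v; (3) n ≤ ρ(N/4) + 5. (Entry 𝔤 = 𝔤𝔩(N,ℍ) of the Hurwitz–Radon value theorem; it recovers the Adams–Lax–Phillips number ℍ_h(N).) -/

import Mathlib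

open Matrix

/-- Extended Hurwitz–Radon number: writing the 2-adic valuation of `t` as `4a + b`
with `a ∈ ℤ` and `b ∈ {0,1,2,3}`, `ρ(t) := 8a + 2^b`. -/
noncomputable def hrRho (t : ℚ) : ℤ :=
  8 * (padicValRat 2 t / 4) + 2 ^ (padicValRat 2 t % 4).toNat

/-!
Tensoring the nine anticommuting symmetric involutions of `M(16, ℝ)` with a small family over `ℍ`
produces enough anticommuting Hermitian matrices.

For the bound, let `A 1, …, A n` be quaternionic Hermitian matrices all of whose nontrivial real
combinations are invertible, and let `γ 1, …, γ n` be Clifford matrices commuting with them, with a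
chirality `Γ` that anticommutes with each `γ j` and commutes with each `A j`. On the Fock space over
`E` consider the Dirac operator `D = ∑ γ j ∂ j + ∑ A j x j`, with the ladder operators normalised to
be bounded. Modulo the closure of the finite rank operators the ladder operators commute, so
`(-∑ γ j ∂ j + ∑ A j x j) D` becomes an invertible positive element and `D` is Fredholm. It is odd
for the parity of the particle number, and conjugation by `Γ` shows that its index from odd to even
is minus its index from even to odd. The supersymmetric oscillator `C` of a CAR representation `e`
on `E` commuting with `γ` and `A` has the same property, and there the index is the dimension of the
vacuum of `e`. Comparing the two factorisations of `C D = D C` shows that the index of `D` is the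
dimension of the vacuum as well, which is `2⁻ⁿ dim E`. On the other hand the CAR algebra over `ℍ`
acts on the kernel and the cokernel of `D`, so `4 · 2ⁿ` divides the index. Taking `E` to be the
matrices with `2ⁿ` columns over `ℍ`, this says that `2ⁿ` divides the size of the matrices `A j`.
Given a linear map on `ℝⁿ` as in (2), apply this to `f j ⊗ 1` and `1 ⊗ γ j`, where `f j` are its
values on a basis and `γ` is the smallest family of real Clifford matrices with a chirality.
-/

namespace HurwitzRadon

open Module Filter Topology
open LinearMap (ker range)
open scoped Quaternion

/-! ### Fredholm index of linear maps -/

section Index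

variable {K V W X V' : Type*} [Field K] [AddCommGroup V] [Module K V] [AddCommGroup W]
  [Module K W] [AddCommGroup X] [Module K X] [AddCommGroup V'] [Module K V']

/-- Fredholm linear maps in the purely algebraic sense: finite-dimensional kernel and cokernel. -/
structure IsFredholm (T : V →ₗ[K] W) : Prop where
  finite_ker : FiniteDimensional K (ker T)
  finite_coker : FiniteDimensional K (W ⧸ range T)

/-- The index `dim ker T - dim coker T`, meaningful for Fredholm maps. -/
noncomputable def index (T : V →ₗ[K] W) : ℤ :=
  (finrank K (ker T) : ℤ) - finrank K (W ⧸ range T)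

lemma finrank_map_add_finrank_inf_ker (f : V →ₗ[K] W) (p : Submodule K V) [FiniteDimensional K p] :
    finrank K (p.map f) + finrank K (p ⊓ ker f : Submodule K V) = finrank K p := by
  have hker : ker (f.domRestrict p) = (p ⊓ ker f).comap p.subtype := by ext; simp
  rw [← LinearMap.finrank_range_add_finrank_ker (f.domRestrict p), LinearMap.range_domRestrict,
    hker, (Submodule.comapSubtypeEquivOfLe inf_le_left).finrank_eq]

lemma finrank_quotient_add_finrank_map_mkQ {p q : Submodule K V} (hpq : p ≤ q)
    [FiniteDimensional K (V ⧸ p)] :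
    finrank K (V ⧸ q) + finrank K (q.map p.mkQ) = finrank K (V ⧸ p) := by
  rw [← (Submodule.quotientQuotientEquivQuotient p q hpq).finrank_eq]
  exact Submodule.finrank_quotient_add_finrank _

lemma map_ker_comp (T : V →ₗ[K] W) (S : W →ₗ[K] X) :
    (ker (S ∘ₗ T)).map T = range T ⊓ ker S := by
  rw [LinearMap.ker_comp, Submodule.map_comap_eq]

/-- `range S / range (S ∘ T)` is `W / (range T + ker S)`. -/
noncomputable def rangeQuotientEquiv (T : V →ₗ[K] W) (S : W →ₗ[K] X) :
    (W ⧸ (range T ⊔ ker S)) ≃ₗ[K] (range S).map (range (S ∘ₗ T)).mkQ :=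
  have hker : ker ((range (S ∘ₗ T)).mkQ ∘ₗ S) = range T ⊔ ker S := by
    rw [LinearMap.ker_comp, Submodule.ker_mkQ, LinearMap.range_comp, Submodule.comap_map_eq]
  have hrange : range ((range (S ∘ₗ T)).mkQ ∘ₗ S) = (range S).map (range (S ∘ₗ T)).mkQ :=
    LinearMap.range_comp _ _
  Submodule.quotEquivOfEq _ _ hker.symm ≪≫ₗ LinearMap.quotKerEquivRange _ ≪≫ₗ
    LinearEquiv.ofEq _ _ hrange

lemma IsFredholm.comp {T : V →ₗ[K] W} {S : W →ₗ[K] X} (hS : IsFredholm S) (hT : IsFredholm T) :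
    IsFredholm (S ∘ₗ T) := by
  have := hS.finite_ker
  have := hT.finite_ker
  have := hS.finite_coker
  have := hT.finite_coker
  constructor
  · refine Module.Finite.iff_fg.2 (Submodule.fg_of_fg_map_of_fg_inf_ker T ?_ ?_) <;>
      refine Module.Finite.iff_fg.1 ?_
    · rw [map_ker_comp]
      exact Submodule.finiteDimensional_of_le inf_le_right
    · exact Submodule.finiteDimensional_of_le inf_le_right
  · have hle : range (S ∘ₗ T) ≤ range S := LinearMap.range_comp_le_range T S
    have : FiniteDimensional K (W ⧸ (range T ⊔ ker S)) :=
      Module.Finite.of_surjective _ (Submodule.factor_surjective le_sup_left)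
    have := (rangeQuotientEquiv T S).finiteDimensional
    have := (Submodule.quotientQuotientEquivQuotient _ _ hle).symm.finiteDimensional
    exact Module.Finite.of_submodule_quotient ((range S).map (range (S ∘ₗ T)).mkQ)

theorem index_comp {T : V →ₗ[K] W} {S : W →ₗ[K] X} (hS : IsFredholm S) (hT : IsFredholm T) :
    index (S ∘ₗ T) = index S + index T := by
  have := hS.finite_ker
  have := hT.finite_coker
  have := (hS.comp hT).finite_ker
  have := (hS.comp hT).finite_coker
  have ker_comp : finrank K (range T ⊓ ker S : Submodule K W) + finrank K (ker T) =
      finrank K (ker (S ∘ₗ T)) := by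
    rw [← finrank_map_add_finrank_inf_ker T (ker (S ∘ₗ T)), map_ker_comp,
      inf_eq_right.2 (LinearMap.ker_le_ker_comp T S)]
  have coker_comp : finrank K (X ⧸ range S) + finrank K (W ⧸ (range T ⊔ ker S)) =
      finrank K (X ⧸ range (S ∘ₗ T)) := by
    rw [(rangeQuotientEquiv T S).finrank_eq]
    exact finrank_quotient_add_finrank_map_mkQ (LinearMap.range_comp_le_range T S)
  have ker_right : finrank K ((ker S).map (range T).mkQ) +
      finrank K (range T ⊓ ker S : Submodule K W) = finrank K (ker S) := by
    rw [← finrank_map_add_finrank_inf_ker (range T).mkQ (ker S), Submodule.ker_mkQ, inf_comm]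
  have coker_left : finrank K (W ⧸ (range T ⊔ ker S)) + finrank K ((ker S).map (range T).mkQ) =
      finrank K (W ⧸ range T) := by
    rw [← finrank_quotient_add_finrank_map_mkQ (le_sup_left : range T ≤ range T ⊔ ker S),
      Submodule.map_sup, Submodule.mkQ_map_self, bot_sup_eq]
  unfold index
  lia

lemma isFredholm_equiv (e : V ≃ₗ[K] W) : IsFredholm (e : V →ₗ[K] W) := by
  constructor
  · rw [LinearEquiv.ker]; infer_instance
  · rw [LinearEquiv.range]; infer_instance

lemma index_equiv (e : V ≃ₗ[K] W) : index (e : V →ₗ[K] W) = 0 := by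
  rw [index, LinearEquiv.ker, LinearEquiv.range, finrank_bot, finrank_zero_of_subsingleton]
  simp

lemma IsFredholm.of_comp_left_right {T : V →ₗ[K] W} {L : W →ₗ[K] X} {R : V' →ₗ[K] V}
    (hL : IsFredholm (L ∘ₗ T)) (hR : IsFredholm (T ∘ₗ R)) : IsFredholm T := by
  have := hL.finite_ker
  have := hR.finite_coker
  exact ⟨Submodule.finiteDimensional_of_le (LinearMap.ker_le_ker_comp T L),
    Module.Finite.of_surjective _ (Submodule.factor_surjective (LinearMap.range_comp_le_range R T))⟩

/-- `f` induces an isomorphism `ker (1 + g f) ≃ ker (1 + f g)` with inverse `-g`. -/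
def kerIdAddCompEquiv (f : V →ₗ[K] W) (g : W →ₗ[K] V) :
    ker (LinearMap.id + g ∘ₗ f) ≃ₗ[K] ker (LinearMap.id + f ∘ₗ g) :=
  have gf (v : ker (LinearMap.id + g ∘ₗ f)) : -g (f v) = v :=
    neg_eq_of_add_eq_zero_left (LinearMap.mem_ker.1 v.2)
  have fg (w : ker (LinearMap.id + f ∘ₗ g)) : -f (g w) = w :=
    neg_eq_of_add_eq_zero_left (LinearMap.mem_ker.1 w.2)
  LinearEquiv.ofLinearMap
    (f.restrict fun v hv => by simpa using congrArg f (LinearMap.mem_ker.1 hv))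
    ((-g).restrict fun w hw => by
      simpa [← neg_add] using congrArg g (LinearMap.mem_ker.1 hw))
    (by ext w; simpa using fg w) (by ext v; simpa using gf v)

/-- `f` induces an isomorphism `coker (1 + g f) ≃ coker (1 + f g)` with inverse `-g`. -/
def cokerIdAddCompEquiv (f : V →ₗ[K] W) (g : W →ₗ[K] V) :
    (V ⧸ range (LinearMap.id + g ∘ₗ f)) ≃ₗ[K] W ⧸ range (LinearMap.id + f ∘ₗ g) :=
  LinearEquiv.ofLinearMap
    (Submodule.mapQ _ _ f (by rintro _ ⟨v, rfl⟩; exact ⟨f v, by simp⟩))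
    (Submodule.mapQ _ _ (-g) (by rintro _ ⟨w, rfl⟩; exact ⟨-g w, by simp [add_comm]⟩))
    (by
      ext w
      exact (Submodule.Quotient.eq _).2 ⟨-w, by simp [sub_eq_add_neg, add_comm]⟩)
    (by
      ext v
      exact (Submodule.Quotient.eq _).2 ⟨-v, by simp [sub_eq_add_neg, add_comm]⟩)

lemma index_eq_zero_of_finiteDimensional [FiniteDimensional K V] (T : V →ₗ[K] V) :
    index T = 0 := by
  have rank_nullity := T.finrank_range_add_finrank_ker
  have quotient := (range T).finrank_quotient_add_finrank
  unfold index
  lia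

/-- Factoring `R` through its range reduces to an endomorphism of a finite-dimensional space. -/
theorem isFredholm_id_add_and_index_eq_zero {R : V →ₗ[K] V} (hR : R.HasFiniteRange) :
    IsFredholm (LinearMap.id + R) ∧ index (LinearMap.id + R) = 0 := by
  have : FiniteDimensional K (range R) := Module.Finite.iff_fg.2 hR
  have factor : R = (range R).subtype ∘ₗ R.rangeRestrict := rfl
  have eker := kerIdAddCompEquiv R.rangeRestrict (range R).subtype
  have ecoker := cokerIdAddCompEquiv R.rangeRestrict (range R).subtype
  rw [← factor] at eker ecoker
  refine ⟨⟨eker.symm.finiteDimensional, ecoker.symm.finiteDimensional⟩, ?_⟩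
  rw [index, eker.finrank_eq, ecoker.finrank_eq]
  exact index_eq_zero_of_finiteDimensional _

/-- `d` divides the dimension of every finite-dimensional representation over `K` of the ring
`S`. -/
def DvdRepDim.{u} (K S : Type*) [Field K] [Ring S] (d : ℕ) : Prop :=
  ∀ (M : Type u) [AddCommGroup M] [Module K M] [FiniteDimensional K M],
    (S →+* Module.End K M) → d ∣ finrank K M

theorem DvdRepDim.dvd_index.{u} {K S : Type*} [Field K] [Ring S] {d : ℕ}
    (hd : DvdRepDim.{u} K S d) {V W : Type u} [AddCommGroup V] [Module K V] [AddCommGroup W]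
    [Module K W] {T : V →ₗ[K] W} (hT : IsFredholm T) (ρ : S →+* Module.End K V)
    (ρ' : S →+* Module.End K W) (h : ∀ s, T ∘ₗ ρ s = ρ' s ∘ₗ T) : (d : ℤ) ∣ index T := by
  have := hT.finite_ker
  have := hT.finite_coker
  have ker_invariant (s : S) (v : V) (hv : v ∈ ker T) : ρ s v ∈ ker T := by
    rw [LinearMap.mem_ker, ← LinearMap.comp_apply, h, LinearMap.comp_apply, hv, map_zero]
  have range_invariant (s : S) : range T ≤ (range T).comap (ρ' s) := by
    rintro _ ⟨v, rfl⟩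
    exact ⟨ρ s v, LinearMap.congr_fun (h s) v⟩
  let ρ_ker : S →+* Module.End K (ker T) :=
    { toFun s := (ρ s).restrict (ker_invariant s)
      map_one' := by ext; simp
      map_mul' _ _ := by ext; simp
      map_zero' := by ext; simp
      map_add' _ _ := by ext; simp }
  let ρ_coker : S →+* Module.End K (W ⧸ range T) :=
    { toFun s := (range T).mapQ (range T) (ρ' s) (range_invariant s)
      map_one' := by ext; simp
      map_mul' _ _ := by ext; simp
      map_zero' := by ext; simp
      map_add' _ _ := by ext; simp }
  exact dvd_sub (Int.natCast_dvd_natCast.2 (hd _ ρ_ker)) (Int.natCast_dvd_natCast.2 (hd _ ρ_coker))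

end Index

/-! ### The Calkin algebra and corners of Fredholm operators -/

section Calkin

variable {𝕜 V W X : Type*} [NontriviallyNormedField 𝕜]
  [NormedAddCommGroup V] [NormedSpace 𝕜 V] [NormedAddCommGroup W] [NormedSpace 𝕜 W]
  [NormedAddCommGroup X] [NormedSpace 𝕜 X]

/-- Norm limits of bounded operators of finite rank. On Hilbert spaces these are the compact
operators. -/
def IsApproximable (T : V →L[𝕜] W) : Prop :=
  T ∈ closure {R : V →L[𝕜] W | (R : V →ₗ[𝕜] W).HasFiniteRange}

namespace IsApproximable

lemma of_hasFiniteRange {R : V →L[𝕜] W} (hR : (R : V →ₗ[𝕜] W).HasFiniteRange) :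
    IsApproximable R :=
  subset_closure hR

lemma add {S T : V →L[𝕜] W} (hS : IsApproximable S) (hT : IsApproximable T) :
    IsApproximable (S + T) :=
  map_mem_closure₂ continuous_add hS hT fun _ hR _ hR' => hR.add hR'

lemma comp_left {T : V →L[𝕜] W} (hT : IsApproximable T) (S : W →L[𝕜] X) :
    IsApproximable (S ∘L T) :=
  map_mem_closure (continuous_const.clm_comp continuous_id) hT fun _ hR => hR.comp_left _

lemma comp_right {T : W →L[𝕜] X} (hT : IsApproximable T) (S : V →L[𝕜] W) :
    IsApproximable (T ∘L S) :=
  map_mem_closure (f := (· ∘L S)) (continuous_id.clm_comp continuous_const) hT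
    fun _ hR => hR.comp_right _

end IsApproximable

variable (𝕜 V) in
/-- The closed two-sided ideal of approximable operators. -/
def approximableIdeal : Ideal (V →L[𝕜] V) where
  carrier := {T | IsApproximable T}
  zero_mem' := .of_hasFiniteRange .zero
  add_mem' hS hT := hS.add hT
  smul_mem' S _ hT := hT.comp_left S

instance : (approximableIdeal 𝕜 V).IsTwoSided := ⟨fun S hT => hT.comp_right S⟩

variable (𝕜 V) in
/-- The quotient map to the Calkin algebra, the bounded operators modulo approximable ones. -/
abbrev calkin : (V →L[𝕜] V) →+* (V →L[𝕜] V) ⧸ approximableIdeal 𝕜 V :=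
  Ideal.Quotient.mk _

lemma calkin_eq_iff {S T : V →L[𝕜] V} : calkin 𝕜 V S = calkin 𝕜 V T ↔ IsApproximable (S - T) :=
  Ideal.Quotient.eq

theorem isFredholm_and_index_eq_zero_of_isApproximable_sub_one [CompleteSpace V]
    {Z : V →L[𝕜] V} (hZ : IsApproximable (Z - 1)) :
    IsFredholm (Z : V →ₗ[𝕜] V) ∧ index (Z : V →ₗ[𝕜] V) = 0 := by
  obtain ⟨R, hR, hdist⟩ := Metric.mem_closure_iff.1 hZ 1 one_pos
  obtain ⟨g, hg⟩ : IsUnit (1 - (R - (Z - 1))) :=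
    isUnit_one_sub_of_norm_lt_one (by rwa [← dist_eq_norm, dist_comm])
  let e := (ContinuousLinearEquiv.ofUnit g).toLinearEquiv
  have hZ_eq : (Z : V →ₗ[𝕜] V) = e ∘ₗ (LinearMap.id + e.symm ∘ₗ (R : V →ₗ[𝕜] V)) := by
    have : (e : V →ₗ[𝕜] V) = (1 - (R - (Z - 1)) : V →L[𝕜] V) := by rw [← hg]; rfl
    rw [LinearMap.comp_add, ← LinearMap.comp_assoc, LinearEquiv.comp_symm, this]
    ext v
    change Z v = (v - (R v - (Z v - v))) + R v
    abel
  obtain ⟨fredholm, index_eq⟩ :=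
    isFredholm_id_add_and_index_eq_zero (hR.comp_left (e.symm : V →ₗ[𝕜] V))
  rw [hZ_eq]
  exact ⟨(isFredholm_equiv e).comp fredholm,
    by rw [index_comp (isFredholm_equiv e) fredholm, index_equiv, index_eq, add_zero]⟩

/-- The matrix entry `q T : range p → range q` of `T` with respect to two projections. -/
def corner (p q T : V →L[𝕜] V) : range (p : V →ₗ[𝕜] V) →ₗ[𝕜] range (q : V →ₗ[𝕜] V) :=
  (q : V →ₗ[𝕜] V).rangeRestrict ∘ₗ (T : V →ₗ[𝕜] V) ∘ₗ (range (p : V →ₗ[𝕜] V)).subtype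

variable {p q r S T : V →L[𝕜] V}

lemma apply_of_mem_range (hp : IsIdempotentElem p) {v : V} (hv : v ∈ range (p : V →ₗ[𝕜] V)) :
    p v = v := by
  obtain ⟨w, rfl⟩ := hv
  exact DFunLike.congr_fun hp.eq w

lemma coe_corner_apply (hp : IsIdempotentElem p) (hT : SemiconjBy T p q)
    (v : range (p : V →ₗ[𝕜] V)) : (corner p q T v : V) = T v :=
  (DFunLike.congr_fun hT.eq (v : V)).symm.trans (congrArg T (apply_of_mem_range hp v.2))

lemma corner_comp_corner (hp : IsIdempotentElem p) (hT : SemiconjBy T p q) (S : V →L[𝕜] V) :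
    corner q r S ∘ₗ corner p q T = corner p r (S * T) := by
  ext v
  exact congrArg (fun w => r (S w)) (coe_corner_apply hp hT v)

lemma corner_one (hp : IsIdempotentElem p) : corner p p 1 = LinearMap.id :=
  LinearMap.ext fun v => Subtype.ext (coe_corner_apply hp (SemiconjBy.one_left p) v)

theorem isFredholm_corner_and_index_eq_zero [CompleteSpace V] (hp : IsIdempotentElem p)
    (hT : calkin 𝕜 V T = 1) : IsFredholm (corner p p T) ∧ index (corner p p T) = 0 := by
  have : CompleteSpace (range (p : V →ₗ[𝕜] V)) :=
    (ContinuousLinearMap.IsIdempotentElem.isClosed_range hp).completeSpace_coe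
  let ι := (range (p : V →ₗ[𝕜] V)).subtypeL
  let π : V →L[𝕜] range (p : V →ₗ[𝕜] V) := p.codRestrict _ fun v => ⟨v, rfl⟩
  have approximable : IsApproximable (π ∘L T ∘L ι - 1) := by
    have split : π ∘L T ∘L ι - 1 = π ∘L (T - 1) ∘L ι := by
      ext v
      have hv : p v = v := apply_of_mem_range hp v.2
      change p (T v) - v = p (T v - v)
      rw [map_sub, hv]
    rw [split]
    exact ((calkin_eq_iff.1 hT).comp_right ι).comp_left π
  exact isFredholm_and_index_eq_zero_of_isApproximable_sub_one approximable

section Parametrix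

variable [CompleteSpace V] (hp : IsIdempotentElem p) (hq : IsIdempotentElem q)
include hp hq

lemma exists_isFredholm_parametrix (hT : SemiconjBy T p q) (hunit : IsUnit (calkin 𝕜 V T)) :
    ∃ L, calkin 𝕜 V L * calkin 𝕜 V T = 1 ∧ IsFredholm (corner q p L) ∧
      IsFredholm (corner p q T) := by
  obtain ⟨⟨_, l, hl', hl⟩, rfl⟩ := hunit
  obtain ⟨L, rfl⟩ := Ideal.Quotient.mk_surjective l
  have left_inverse : IsFredholm (corner q p L ∘ₗ corner p q T) := by
    rw [corner_comp_corner hp hT]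
    exact (isFredholm_corner_and_index_eq_zero hp hl).1
  have right_inverse : IsFredholm (corner p q T ∘ₗ corner q p L) := by
    have corner_mul : corner p q T ∘ₗ corner q p L = corner q q (T * L) := by
      ext v
      have hTp : T (p (L v)) = q (T (L v)) := DFunLike.congr_fun hT.eq (L v)
      have hqq : q (q (T (L v))) = q (T (L v)) := apply_of_mem_range hq ⟨_, rfl⟩
      exact (congrArg q hTp).trans hqq
    rw [corner_mul]
    exact (isFredholm_corner_and_index_eq_zero hq hl').1
  exact ⟨L, hl, .of_comp_left_right right_inverse left_inverse,
    .of_comp_left_right left_inverse right_inverse⟩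

lemma isFredholm_corner (hT : SemiconjBy T p q) (hunit : IsUnit (calkin 𝕜 V T)) :
    IsFredholm (corner p q T) :=
  let ⟨_, _, _, h⟩ := exists_isFredholm_parametrix hp hq hT hunit
  h

theorem index_corner_congr (hS : SemiconjBy S p q) (hT : SemiconjBy T p q)
    (hunit : IsUnit (calkin 𝕜 V T)) (hST : calkin 𝕜 V S = calkin 𝕜 V T) :
    index (corner p q S) = index (corner p q T) := by
  obtain ⟨L, hL, hL_fredholm, -⟩ := exists_isFredholm_parametrix hp hq hT hunit
  have index_add {U : V →L[𝕜] V} (hU : SemiconjBy U p q) (hUT : calkin 𝕜 V U = calkin 𝕜 V T) :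
      index (corner q p L) + index (corner p q U) = 0 := by
    rw [← index_comp hL_fredholm (isFredholm_corner hp hq hU (hUT ▸ hunit)),
      corner_comp_corner hp hU]
    exact (isFredholm_corner_and_index_eq_zero hp (by rw [map_mul, hUT, hL])).2
  exact add_left_cancel ((index_add hS hST).trans (index_add hT rfl).symm)

end Parametrix

lemma index_corner_mul [CompleteSpace V] (hp : IsIdempotentElem p) (hq : IsIdempotentElem q)
    (hr : IsIdempotentElem r) (hS : SemiconjBy S q r) (hS_unit : IsUnit (calkin 𝕜 V S))
    (hT : SemiconjBy T p q) (hT_unit : IsUnit (calkin 𝕜 V T)) :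
    index (corner p r (S * T)) = index (corner q r S) + index (corner p q T) := by
  rw [← corner_comp_corner hp hT, index_comp (isFredholm_corner hq hr hS hS_unit)
    (isFredholm_corner hp hq hT hT_unit)]

lemma index_corner_units (hp : IsIdempotentElem p) (g : (V →L[𝕜] V)ˣ)
    (hg : SemiconjBy g.1 p p) : index (corner p p g.1) = 0 := by
  have inverse : SemiconjBy (g⁻¹).1 p p := hg.units_inv_symm_left
  exact index_equiv (LinearEquiv.ofLinearMap (corner p p g.1) (corner p p (g⁻¹).1)
    (by rw [corner_comp_corner hp inverse, g.mul_inv, corner_one hp])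
    (by rw [corner_comp_corner hp hg, g.inv_mul, corner_one hp]))

end Calkin

/-! ### Weighted shifts on spaces of square-summable families -/

/-- The data of an operator `(T u) β = w β • u (f β)` on square-summable families indexed by `κ`.
Injectivity of `f` where `w` does not vanish makes it bounded by `sup |w|`. -/
structure WeightedShift (κ : Type*) where
  source : κ → κ
  weight : κ → ℝ
  bounded : ∃ C, ∀ β, |weight β| ≤ C
  injOn : Set.InjOn source (Function.support weight)

/-- The Hilbert space of square-summable families of vectors of `E` indexed by `κ`. -/
abbrev SquareSummable (κ E : Type*) [NormedAddCommGroup E] : Type _ := lp (fun _ : κ => E) 2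

section Shift

variable {κ E : Type*} [NormedAddCommGroup E] [InnerProductSpace ℝ E]

namespace WeightedShift

lemma sum_norm_sq_le (W : WeightedShift κ) {C : ℝ} (hC : ∀ β, |W.weight β| ≤ C)
    (u : SquareSummable κ E) (s : Finset κ) :
    ∑ β ∈ s, ‖W.weight β • u (W.source β)‖ ^ 2 ≤ (C * ‖u‖) ^ 2 := by
  classical
  set t := s.filter (W.weight · ≠ 0)
  have injOn : Set.InjOn W.source t :=
    W.injOn.mono fun β hβ => (Finset.mem_filter.1 (Finset.mem_coe.1 hβ)).2
  have image_le : ∑ α ∈ t.image W.source, ‖u α‖ ^ 2 ≤ ‖u‖ ^ 2 := by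
    simpa using lp.sum_rpow_le_norm_rpow (p := 2) (by norm_num) u (t.image W.source)
  calc ∑ β ∈ s, ‖W.weight β • u (W.source β)‖ ^ 2
      = ∑ β ∈ t, ‖W.weight β • u (W.source β)‖ ^ 2 :=
        (Finset.sum_filter_of_ne fun β _ h => by contrapose! h; simp [h]).symm
    _ ≤ ∑ β ∈ t, C ^ 2 * ‖u (W.source β)‖ ^ 2 := by
        refine Finset.sum_le_sum fun β _ => ?_
        rw [norm_smul, Real.norm_eq_abs, mul_pow]
        gcongr
        exact hC β
    _ = C ^ 2 * ∑ α ∈ t.image W.source, ‖u α‖ ^ 2 := by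
        rw [Finset.sum_image injOn, Finset.mul_sum]
    _ ≤ (C * ‖u‖) ^ 2 := by
        rw [mul_pow]
        gcongr

variable (E) in
/-- The bounded operator `(T u) β = w β • u (f β)` of a weighted shift. -/
noncomputable def op (W : WeightedShift κ) : SquareSummable κ E →L[ℝ] SquareSummable κ E :=
  LinearMap.mkContinuousOfExistsBound
    { toFun u := ⟨fun β => W.weight β • u (W.source β), by
        obtain ⟨C, hC⟩ := W.bounded
        exact memℓp_gen' fun s => by simpa using W.sum_norm_sq_le hC u s⟩
      map_add' u v := lp.ext <| funext fun β => smul_add _ _ _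
      map_smul' c u := lp.ext <| funext fun β => smul_comm _ _ _ }
    (by
      obtain ⟨C, hC⟩ := W.bounded
      refine ⟨|C|, fun u => lp.norm_le_of_forall_sum_le (by norm_num) (by positivity) fun s => ?_⟩
      simpa using W.sum_norm_sq_le (fun β => (hC β).trans (le_abs_self C)) u s)

@[simp] lemma op_apply (W : WeightedShift κ) (u : SquareSummable κ E) (β : κ) :
    W.op E u β = W.weight β • u (W.source β) := rfl

lemma norm_op_le (W : WeightedShift κ) {C : ℝ} (hC₀ : 0 ≤ C) (hC : ∀ β, |W.weight β| ≤ C) :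
    ‖W.op E‖ ≤ C :=
  ContinuousLinearMap.opNorm_le_bound _ hC₀ fun u =>
    lp.norm_le_of_forall_sum_le (by norm_num) (by positivity) fun s => by
      simpa using W.sum_norm_sq_le hC u s

/-- `W'` undoes `W` with the same weight wherever the weight of `W` does not vanish. -/
def Reverses (W' W : WeightedShift κ) : Prop :=
  ∀ β, W.weight β ≠ 0 → W'.source (W.source β) = β ∧ W'.weight (W.source β) = W.weight β

theorem star_op [CompleteSpace E] {W W' : WeightedShift κ} (h : W'.Reverses W)
    (h' : W.Reverses W') : star (W.op E) = W'.op E := by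
  refine ((ContinuousLinearMap.eq_adjoint_iff _ _).2 fun u v => ?_).symm
  rw [lp.inner_eq_tsum, lp.inner_eq_tsum]
  have weight_ne {α : κ} (hα : inner ℝ (W'.op E u α) (v α) ≠ 0) : W'.weight α ≠ 0 := by
    intro h0
    simp [h0] at hα
  refine (tsum_eq_tsum_of_ne_zero_bij (fun α => W'.source α) ?_ ?_ ?_).symm
  · intro α β hαβ
    exact Subtype.ext (W'.injOn (weight_ne α.2) (weight_ne β.2) hαβ)
  · intro β hβ
    have hw : W.weight β ≠ 0 := fun h0 => hβ (by simp [h0])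
    obtain ⟨source_eq, weight_eq⟩ := h β hw
    refine ⟨⟨W.source β, ?_⟩, source_eq⟩
    simpa [source_eq, weight_eq, inner_smul_left, inner_smul_right] using hβ
  · intro α
    obtain ⟨source_eq, weight_eq⟩ := h' α (weight_ne α.2)
    simp [source_eq, weight_eq, inner_smul_left, inner_smul_right]

lemma commute_op {W W' : WeightedShift κ}
    (hs : ∀ β, W'.source (W.source β) = W.source (W'.source β))
    (hw : ∀ β, W.weight β * W'.weight (W.source β) = W'.weight β * W.weight (W'.source β)) :
    Commute (W.op E) (W'.op E) := by
  ext u β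
  simp only [mul_apply_eq_comp, op_apply, smul_smul, hs, hw]

/-- The shift with its weights cut off outside `s`. -/
noncomputable def restrict (W : WeightedShift κ) (s : Set κ) : WeightedShift κ where
  source := W.source
  weight := s.indicator W.weight
  bounded := by
    obtain ⟨C, hC⟩ := W.bounded
    exact ⟨C, fun β => (norm_indicator_le_norm_self W.weight β).trans (hC β)⟩
  injOn := W.injOn.mono (by simp)

end WeightedShift

lemma hasFiniteRange_of_finite_support [FiniteDimensional ℝ E] {s : Set κ} (hs : s.Finite)
    {T : SquareSummable κ E →L[ℝ] SquareSummable κ E} (hT : ∀ u, ∀ β ∉ s, T u β = 0) :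
    (T : SquareSummable κ E →ₗ[ℝ] SquareSummable κ E).HasFiniteRange := by
  classical
  have decomposition : (T : SquareSummable κ E →ₗ[ℝ] SquareSummable κ E) =
      ∑ β ∈ hs.toFinset, lp.lsingle (E := fun _ : κ => E) 2 β ∘ₗ
        (lp.evalCLM ℝ (fun _ : κ => E) 2 β).toLinearMap ∘ₗ T := by
    ext u β
    rw [LinearMap.sum_apply, lp.coeFn_sum, Finset.sum_apply]
    by_cases hβ : β ∈ s
    · rw [Finset.sum_eq_single_of_mem β (hs.mem_toFinset.2 hβ)]
      · exact (lp.single_apply_self (E := fun _ : κ => E) 2 β _).symm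
      · exact fun α _ hα => lp.single_apply_ne (E := fun _ : κ => E) 2 α _ hα.symm
    · have ne {α : κ} (hα : α ∈ hs.toFinset) : β ≠ α := fun h => hβ (h ▸ hs.mem_toFinset.1 hα)
      exact (hT u β hβ).trans (Finset.sum_eq_zero fun α hα =>
        lp.single_apply_ne (E := fun _ : κ => E) 2 α _ (ne hα)).symm
  rw [decomposition]
  exact LinearMap.mem_finiteRange_iff_hasFiniteRange.1 <| Submodule.sum_mem _ fun β _ =>
    LinearMap.mem_finiteRange_iff_hasFiniteRange.2 (.comp_right .of_finite_dom _)

theorem isApproximable_of_tendsto_weight [FiniteDimensional ℝ E]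
    {T : SquareSummable κ E →L[ℝ] SquareSummable κ E} {f : κ → κ} {w : κ → ℝ}
    (hT : ∀ u β, T u β = w β • u (f β)) (hf : Set.InjOn f (Function.support w))
    (hw : Tendsto w cofinite (𝓝 0)) : IsApproximable T := by
  obtain ⟨C, hC⟩ := hw.norm.bddAbove_range_of_cofinite
  let W : WeightedShift κ := ⟨f, w, ⟨C, fun β => hC ⟨β, rfl⟩⟩, hf⟩
  refine Metric.mem_closure_iff.2 fun ε hε => ?_
  set s := {β | ε / 2 ≤ |w β|} with hs
  have finite : s.Finite := by
    have := Metric.tendsto_nhds.1 hw (ε / 2) (half_pos hε)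
    simpa [hs] using this
  refine ⟨T - (W.restrict sᶜ).op E, hasFiniteRange_of_finite_support finite fun u β hβ => ?_, ?_⟩
  · simp [WeightedShift.restrict, W, hT, hβ]
  · rw [dist_eq_norm, sub_sub_cancel]
    refine ((W.restrict sᶜ).norm_op_le (half_pos hε).le fun β => ?_).trans_lt (half_lt_self hε)
    by_cases hβ : β ∈ s
    · simp [WeightedShift.restrict, hβ, (half_pos hε).le]
    · simpa [WeightedShift.restrict, hβ, W] using (not_le.1 hβ).le

variable (κ E) in
/-- Operators on `E` act on families in `E` by application to every member. -/
noncomputable def fiberwiseHom :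
    (E →L[ℝ] E) →+* (SquareSummable κ E →L[ℝ] SquareSummable κ E) where
  toFun M := lp.mapCLM 2 (fun _ => M) (norm_nonneg M) fun _ => le_rfl
  map_one' := rfl
  map_mul' _ _ := rfl
  map_zero' := rfl
  map_add' _ _ := rfl

@[simp] lemma fiberwiseHom_apply (M : E →L[ℝ] E) (u : SquareSummable κ E) (β : κ) :
    fiberwiseHom κ E M u β = M (u β) := rfl

lemma star_fiberwiseHom [CompleteSpace E] (M : E →L[ℝ] E) :
    star (fiberwiseHom κ E M) = fiberwiseHom κ E (star M) := by
  refine ((ContinuousLinearMap.eq_adjoint_iff _ _).2 fun u v => ?_).symm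
  rw [lp.inner_eq_tsum, lp.inner_eq_tsum]
  exact tsum_congr fun β => M.adjoint_inner_left _ _

lemma commute_fiberwiseHom_op (M : E →L[ℝ] E) (W : WeightedShift κ) :
    Commute (fiberwiseHom κ E M) (W.op E) := by
  ext u β
  simp [mul_apply_eq_comp]

variable (E) in
/-- The projection onto the families supported in `s`. -/
noncomputable def projOn (s : Set κ) : SquareSummable κ E →L[ℝ] SquareSummable κ E :=
  WeightedShift.op E
    { source := id
      weight := s.indicator 1
      bounded := ⟨1, fun β => by by_cases hβ : β ∈ s <;> simp [hβ]⟩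
      injOn := Function.injective_id.injOn }

lemma projOn_apply (s : Set κ) (u : SquareSummable κ E) : ⇑(projOn E s u) = s.indicator u := by
  ext β
  by_cases hβ : β ∈ s <;> simp [projOn, hβ]

lemma isIdempotentElem_projOn (s : Set κ) : IsIdempotentElem (projOn E s) := by
  ext u : 2
  simp [mul_apply_eq_comp, projOn_apply]

lemma one_sub_projOn (s : Set κ) : 1 - projOn E s = projOn E sᶜ := by
  ext u : 2
  rw [projOn_apply, Set.indicator_compl, ← projOn_apply]
  rfl

lemma WeightedShift.semiconjBy_projOn (W : WeightedShift κ) {s t : Set κ}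
    (h : ∀ β, W.weight β ≠ 0 → (W.source β ∈ s ↔ β ∈ t)) :
    SemiconjBy (W.op E) (projOn E s) (projOn E t) := by
  ext u β
  rw [mul_apply_eq_comp, mul_apply_eq_comp, projOn_apply, W.op_apply, projOn_apply]
  by_cases hw : W.weight β = 0
  · by_cases hβ : β ∈ t <;> simp [hw, hβ]
  · by_cases hβ : β ∈ t <;> simp [hβ, h β hw]

end Shift

/-! ### Normalised ladder operators -/

section Ladder

variable {ι : Type*}

lemma cons_injective (j : ι) : Function.Injective (j ::ₘ ·) :=
  fun _ _ => (Multiset.cons_inj_right j).1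

variable [DecidableEq ι]

lemma injOn_erase (j : ι) : Set.InjOn (fun β : Multiset ι => β.erase j) {β | j ∈ β} :=
  fun β hβ γ hγ h => by
    rw [← Multiset.cons_erase hβ, ← Multiset.cons_erase hγ]
    exact congrArg (j ::ₘ ·) h

lemma count_le_card_real (j : ι) (β : Multiset ι) : (β.count j : ℝ) ≤ β.card :=
  mod_cast Multiset.count_le_card j β

lemma card_erase_add_one_real {j : ι} {β : Multiset ι} (h : j ∈ β) :
    ((β.erase j).card : ℝ) + 1 = β.card :=
  mod_cast Multiset.card_erase_add_one h

lemma mem_of_sqrt_count_ne_zero {j : ι} {β : Multiset ι} (h : √(β.count j : ℝ) ≠ 0) : j ∈ β :=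
  Multiset.count_ne_zero.1 fun h0 => h (by simp [h0])

lemma abs_sqrt_div_sqrt_le_one {a b : ℝ} (h : a ≤ b) : |√a / √b| ≤ 1 := by
  rw [abs_of_nonneg (by positivity)]
  exact div_le_one_of_le₀ (Real.sqrt_le_sqrt h) (Real.sqrt_nonneg b)

/-- The annihilation operator `a_j` of the oscillator with states `β : Multiset ι`, acting on
coefficient families and normalised to `a_j (1 + N)^(-1/2)`, where `N` is the degree. -/
noncomputable def annihilation (j : ι) : WeightedShift (Multiset ι) where
  source β := j ::ₘ β
  weight β := √(β.count j + 1) / √(2 + β.card)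
  bounded := ⟨1, fun β => abs_sqrt_div_sqrt_le_one (by linarith [count_le_card_real j β])⟩
  injOn := (cons_injective j).injOn

/-- The adjoint `(1 + N)^(-1/2) a_j*` of `annihilation j`. -/
noncomputable def creation (j : ι) : WeightedShift (Multiset ι) where
  source β := β.erase j
  weight β := √(β.count j) / √(1 + β.card)
  bounded := ⟨1, fun β => abs_sqrt_div_sqrt_le_one (by linarith [count_le_card_real j β])⟩
  injOn := (injOn_erase j).mono fun _ h => mem_of_sqrt_count_ne_zero (div_ne_zero_iff.1 h).1

/-- The variant `a_j* (1 + N)^(-1/2)` of `creation j`, which has the same normalising factor as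
`annihilation j`. -/
noncomputable def creationRight (j : ι) : WeightedShift (Multiset ι) where
  source β := β.erase j
  weight β := √(β.count j) / √β.card
  bounded := ⟨1, fun β => abs_sqrt_div_sqrt_le_one (count_le_card_real j β)⟩
  injOn := (injOn_erase j).mono fun _ h => mem_of_sqrt_count_ne_zero (div_ne_zero_iff.1 h).1

lemma mem_of_creation_weight_ne_zero {j : ι} {β : Multiset ι} (h : (creation j).weight β ≠ 0) :
    j ∈ β :=
  mem_of_sqrt_count_ne_zero (div_ne_zero_iff.1 h).1

lemma creation_reverses_annihilation (j : ι) :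
    (creation j).Reverses (annihilation j) := fun β _ => by
  refine ⟨Multiset.erase_cons_head j β, ?_⟩
  simp only [creation, annihilation, Multiset.count_cons_self, Multiset.card_cons]
  push_cast
  ring_nf

lemma annihilation_reverses_creation (j : ι) :
    (annihilation j).Reverses (creation j) := fun β hβ => by
  have cons_erase := Multiset.cons_erase (mem_of_creation_weight_ne_zero hβ)
  refine ⟨cons_erase, ?_⟩
  have := (creation_reverses_annihilation j (β.erase j) (by simp only [annihilation]; positivity)).2
  simp only [annihilation, cons_erase] at this
  exact this.symm

variable (E : Type*) [NormedAddCommGroup E] [InnerProductSpace ℝ E]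

lemma star_annihilation [CompleteSpace E] (j : ι) :
    star ((annihilation j).op E) = (creation j).op E :=
  WeightedShift.star_op (creation_reverses_annihilation j) (annihilation_reverses_creation j)

lemma commute_annihilation (j k : ι) : Commute ((annihilation j).op E) ((annihilation k).op E) := by
  rcases eq_or_ne j k with rfl | h
  · rfl
  refine WeightedShift.commute_op (fun β => Multiset.cons_swap k j β) fun β => ?_
  simp only [annihilation, Multiset.count_cons_of_ne h, Multiset.count_cons_of_ne h.symm,
    Multiset.card_cons]
  ring

lemma commute_creation [CompleteSpace E] (j k : ι) :
    Commute ((creation j).op E) ((creation k).op E) := by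
  simpa only [star_annihilation] using (commute_annihilation E j k).star_star

lemma annihilation_mul_creation_apply (j k : ι) (u : SquareSummable (Multiset ι) E)
    (β : Multiset ι) :
    ((annihilation j).op E * (creation k).op E) u β =
      (√(β.count j + 1) * √((j ::ₘ β).count k) / (2 + β.card)) • u ((j ::ₘ β).erase k) := by
  simp only [mul_apply_eq_comp, WeightedShift.op_apply, annihilation, creation, smul_smul,
    Multiset.card_cons, div_mul_div_comm]
  push_cast
  rw [show (1 + (β.card + 1 : ℝ)) = 2 + β.card by ring, Real.mul_self_sqrt (by positivity)]

lemma creation_mul_annihilation_apply (j k : ι) (u : SquareSummable (Multiset ι) E)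
    (β : Multiset ι) :
    ((creation k).op E * (annihilation j).op E) u β =
      (√(β.count k) * √((β.erase k).count j + 1) / (1 + β.card)) • u (j ::ₘ β.erase k) := by
  simp only [mul_apply_eq_comp, WeightedShift.op_apply, annihilation, creation, smul_smul,
    div_mul_div_comm]
  by_cases hk : k ∈ β
  · rw [show (2 + (β.erase k).card : ℝ) = 1 + β.card by linarith [card_erase_add_one_real hk],
      Real.mul_self_sqrt (by positivity)]
  · simp [Multiset.count_eq_zero_of_notMem hk]

lemma creation_mul_annihilation_self_apply (j : ι) (u : SquareSummable (Multiset ι) E)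
    (β : Multiset ι) :
    ((creation j).op E * (annihilation j).op E) u β = (β.count j / (1 + β.card) : ℝ) • u β := by
  rw [creation_mul_annihilation_apply]
  by_cases hj : j ∈ β
  · have count_pos := Multiset.count_pos.2 hj
    rw [Multiset.cons_erase hj, Multiset.count_erase_self, Nat.cast_pred count_pos, sub_add_cancel,
      Real.mul_self_sqrt (by positivity)]
  · simp [Multiset.count_eq_zero_of_notMem hj]

/-- The relation `a_j a_k* = a_k* a_j + δ_jk`, in terms of the normalised operators. -/
lemma canonical_commutation_apply (j k : ι) (u : SquareSummable (Multiset ι) E) (β : Multiset ι) :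
    (2 + β.card : ℝ) • ((annihilation j).op E * (creation k).op E) u β =
      (1 + β.card : ℝ) • ((creation k).op E * (annihilation j).op E) u β +
        if j = k then u β else 0 := by
  have two_ne : (2 + β.card : ℝ) ≠ 0 := by positivity
  have one_ne : (1 + β.card : ℝ) ≠ 0 := by positivity
  rw [annihilation_mul_creation_apply, smul_smul, mul_div_cancel₀ _ two_ne]
  split_ifs with h
  · subst h
    rw [creation_mul_annihilation_self_apply, smul_smul, mul_div_cancel₀ _ one_ne,
      Multiset.erase_cons_head, Multiset.count_cons_self]
    push_cast
    rw [Real.mul_self_sqrt (by positivity), add_smul, one_smul]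
  · rw [creation_mul_annihilation_apply, smul_smul, mul_div_cancel₀ _ one_ne,
      Multiset.count_cons_of_ne (Ne.symm h), Multiset.count_erase_of_ne h,
      Multiset.erase_cons_tail _ h, add_zero, mul_comm]

variable [Finite ι]

omit [DecidableEq ι] in
lemma tendsto_cofinite_of_abs_le_inv_card {w : Multiset ι → ℝ}
    (hw : ∀ β, |w β| ≤ 1 / (1 + β.card)) : Tendsto w cofinite (𝓝 0) := by
  classical
  cases nonempty_fintype ι
  have card_tendsto : Tendsto (fun β : Multiset ι => β.card) cofinite atTop := by
    refine tendsto_atTop.2 fun m => ?_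
    refine (Set.finite_Iic (m • (Finset.univ : Finset ι).val)).subset fun β hβ => ?_
    refine Multiset.le_iff_count.2 fun j => ?_
    simpa using (Multiset.count_le_card j β).trans (Nat.le_of_not_le hβ)
  refine squeeze_zero_norm hw ?_
  simpa [add_comm, Function.comp_def] using
    (tendsto_one_div_add_atTop_nhds_zero_nat (𝕜 := ℝ)).comp card_tendsto

variable [FiniteDimensional ℝ E]

lemma isApproximable_creationRight_sub_creation (j : ι) :
    IsApproximable ((creationRight j).op E - (creation j).op E) := by
  refine isApproximable_of_tendsto_weight (f := fun β => β.erase j)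
    (w := fun β => √(β.count j) / √β.card - √(β.count j) / √(1 + β.card))
    (fun u β => (sub_smul _ _ _).symm) ((injOn_erase j).mono fun β hβ => ?_)
    (tendsto_cofinite_of_abs_le_inv_card fun β => ?_)
  · exact mem_of_sqrt_count_ne_zero fun h => hβ (by simp [h])
  rcases eq_or_ne β.card 0 with h0 | h0
  · simp [Multiset.card_eq_zero.1 h0]
  set m : ℝ := (β.card : ℝ)
  have hm : 0 < m := by positivity
  have sqrt_le : √m ≤ √(1 + m) := Real.sqrt_le_sqrt (by linarith)
  have factor : √(β.count j) / √m - √(β.count j) / √(1 + m) =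
      √(β.count j) / √m * ((√(1 + m) - √m) / √(1 + m)) := by
    field_simp
  rw [factor, abs_mul, abs_of_nonneg (div_nonneg (sub_nonneg.2 sqrt_le) (Real.sqrt_nonneg _))]
  calc |√(β.count j) / √m| * ((√(1 + m) - √m) / √(1 + m))
      ≤ 1 * ((√(1 + m) - √m) / √(1 + m)) := by
        gcongr
        exact abs_sqrt_div_sqrt_le_one (count_le_card_real j β)
    _ ≤ 1 / (1 + m) := by
        rw [one_mul, div_le_div_iff₀ (by positivity) (by positivity)]
        nlinarith [Real.sq_sqrt hm.le, Real.sq_sqrt (show 0 ≤ 1 + m by positivity),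
          Real.sqrt_nonneg m, Real.sqrt_nonneg (1 + m)]

lemma isApproximable_commutator (j k : ι) :
    IsApproximable
      ((annihilation j).op E * (creation k).op E - (creation k).op E * (annihilation j).op E) := by
  let D : WeightedShift (Multiset ι) :=
    { source := id
      weight := fun β => (2 + β.card : ℝ)⁻¹
      bounded := ⟨1, fun β => by
        rw [abs_of_nonneg (by positivity)]
        exact inv_le_one_of_one_le₀ (by linarith [Nat.cast_nonneg (α := ℝ) β.card])⟩
      injOn := Function.injective_id.injOn }
  have approximable : IsApproximable (D.op E) :=
    isApproximable_of_tendsto_weight (fun _ _ => rfl) D.injOn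
      (tendsto_cofinite_of_abs_le_inv_card fun β => by
        rw [one_div, abs_of_nonneg (by positivity)]
        exact inv_anti₀ (by positivity) (by gcongr; norm_num))
  suffices commutator_eq : (annihilation j).op E * (creation k).op E -
      (creation k).op E * (annihilation j).op E =
      D.op E * ((if j = k then 1 else 0) - (creation k).op E * (annihilation j).op E) by
    rw [commutator_eq]
    exact approximable.comp_right _
  ext u β
  have D_apply (v) : D.op E v β = (2 + β.card : ℝ)⁻¹ • v β := rfl
  have delta_apply : ((if j = k then 1 else 0 :
      SquareSummable (Multiset ι) E →L[ℝ] SquareSummable (Multiset ι) E) u) β =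
      if j = k then u β else 0 := by
    split_ifs <;> rfl
  rw [mul_apply_eq_comp (D.op E), D_apply, _root_.sub_apply, _root_.sub_apply,
    lp.coeFn_sub, lp.coeFn_sub, Pi.sub_apply, Pi.sub_apply, delta_apply,
    eq_inv_smul_iff₀ (by positivity), smul_sub, canonical_commutation_apply]
  module

lemma isApproximable_sum_creation_mul_annihilation_sub_one {ι : Type*} [DecidableEq ι]
    [Fintype ι] : IsApproximable (∑ j : ι, (creation j).op E * (annihilation j).op E - 1) := by
  refine isApproximable_of_tendsto_weight (f := id) (w := fun β => -(1 / (1 + β.card)))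
    (fun u β => ?_) Function.injective_id.injOn
    (tendsto_cofinite_of_abs_le_inv_card fun β => by rw [abs_neg, abs_of_nonneg (by positivity)])
  have weight_sum : ∑ j, (β.count j / (1 + β.card) : ℝ) = 1 - 1 / (1 + β.card) := by
    rw [← Finset.sum_div, ← Nat.cast_sum, Multiset.sum_count_eq_card fun _ _ => Finset.mem_univ _]
    field_simp
    ring
  rw [_root_.sub_apply, _root_.sum_apply, lp.coeFn_sub, Pi.sub_apply, lp.coeFn_sum,
    Finset.sum_apply]
  simp only [creation_mul_annihilation_self_apply]
  rw [← Finset.sum_smul, weight_sum, sub_smul, one_smul, neg_smul]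
  exact sub_sub_cancel_left _ _

end Ladder

section Parity

variable {ι : Type*} (E : Type*) [NormedAddCommGroup E] [InnerProductSpace ℝ E]

variable (ι) in
/-- The projection onto the families supported in even degrees. -/
noncomputable def evenProj :
    SquareSummable (Multiset ι) E →L[ℝ] SquareSummable (Multiset ι) E :=
  projOn E {β | Even β.card}

lemma isIdempotentElem_evenProj : IsIdempotentElem (evenProj ι E) := isIdempotentElem_projOn _

lemma even_fiberwiseHom (M : E →L[ℝ] E) :
    Commute (fiberwiseHom (Multiset ι) E M) (evenProj ι E) :=
  commute_fiberwiseHom_op M _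

variable [DecidableEq ι]

lemma odd_annihilation (j : ι) :
    SemiconjBy ((annihilation j).op E) (evenProj ι E) (1 - evenProj ι E) := by
  rw [evenProj, one_sub_projOn]
  exact (annihilation j).semiconjBy_projOn fun β _ => by
    simp [annihilation, Nat.even_add_one]

lemma odd_creation (j : ι) :
    SemiconjBy ((creation j).op E) (evenProj ι E) (1 - evenProj ι E) := by
  rw [evenProj, one_sub_projOn]
  exact (creation j).semiconjBy_projOn fun β hβ => by
    simp [creation, ← Multiset.card_erase_add_one (mem_of_creation_weight_ne_zero hβ),
      Nat.even_add_one]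

end Parity

/-! ### Lower bound for the position part -/

section BoundedBelow

variable {ι V : Type*} [Fintype ι] [NormedAddCommGroup V] [InnerProductSpace ℝ V]

/-- Every real combination `∑ j, l j • A j` of the operators `A j` is bounded below in proportion
to the length of `l`; the constant `δ` refers to squares. -/
def BoundedBelow (δ : ℝ) (A : ι → V → V) : Prop :=
  ∀ (l : ι → ℝ) (v : V), δ * (∑ j, l j ^ 2) * ‖v‖ ^ 2 ≤ ‖∑ j, l j • A j v‖ ^ 2

/-- Commuting symmetric `X j` act as scalars `χ j` on their joint eigenspaces, where the claim is
the hypothesis with `l = χ`; the joint eigenspaces are orthogonal and preserved by `A`. -/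
theorem BoundedBelow.le_norm_sq_sum_apply [FiniteDimensional ℝ V] {δ : ℝ}
    {A X : ι → V →ₗ[ℝ] V} (hA : BoundedBelow δ (fun j => A j)) (hX : ∀ j, (X j).IsSymmetric)
    (hXX : ∀ j k, Commute (X j) (X k)) (hAX : ∀ j k, Commute (A j) (X k)) (v : V) :
    δ * ∑ j, ‖X j v‖ ^ 2 ≤ ‖∑ j, A j (X j v)‖ ^ 2 := by
  have iSup_eq_top : ⨆ χ : ι → ℝ, ⨅ i, End.eigenspace (X i) (χ i) = ⊤ :=
    LinearMap.IsSymmetric.iSup_iInf_eq_top_of_commute hX fun j k _ => hXX j k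
  obtain ⟨f, hf, rfl⟩ :=
    (Submodule.mem_iSup_iff_exists_finsupp _ v).1 (iSup_eq_top ▸ Submodule.mem_top)
  have eigen (χ : ι → ℝ) (j : ι) : X j (f χ) = χ j • f χ :=
    End.mem_eigenspace_iff.1 ((Submodule.mem_iInf _).1 (hf χ) j)
  have orthogonal := LinearMap.IsSymmetric.orthogonalFamily_iInf_eigenspaces hX
  have pythagoras (g : (ι → ℝ) → V) (hg : ∀ χ, g χ ∈ ⨅ i, End.eigenspace (X i) (χ i)) :
      ‖∑ χ ∈ f.support, g χ‖ ^ 2 = ∑ χ ∈ f.support, ‖g χ‖ ^ 2 := by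
    simpa using orthogonal.norm_sum (fun χ => ⟨g χ, hg χ⟩) f.support
  have apply_X (j : ι) : X j (f.sum fun _ x => x) = ∑ χ ∈ f.support, χ j • f χ := by
    rw [Finsupp.sum, map_sum]
    exact Finset.sum_congr rfl fun χ _ => eigen χ j
  have norm_X (j : ι) :
      ‖X j (f.sum fun _ x => x)‖ ^ 2 = ∑ χ ∈ f.support, χ j ^ 2 * ‖f χ‖ ^ 2 := by
    rw [apply_X, pythagoras _ fun χ => Submodule.smul_mem _ _ (hf χ)]
    simp [norm_smul, mul_pow]
  have apply_A : ∑ j, A j (X j (f.sum fun _ x => x)) =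
      ∑ χ ∈ f.support, ∑ j, χ j • A j (f χ) := by
    rw [Finset.sum_comm]
    simp [apply_X]
  have A_mem (χ : ι → ℝ) (j : ι) : A j (f χ) ∈ ⨅ i, End.eigenspace (X i) (χ i) :=
    (Submodule.mem_iInf _).2 fun k => End.mem_eigenspace_iff.2 <| by
      rw [← Module.End.mul_apply, ← (hAX j k).eq, Module.End.mul_apply, eigen, map_smul]
  rw [apply_A, pythagoras _ fun χ =>
    Submodule.sum_mem _ fun j _ => Submodule.smul_mem _ _ (A_mem χ j)]
  simp only [norm_X]
  rw [Finset.sum_comm, Finset.mul_sum]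
  refine Finset.sum_le_sum fun χ _ => ?_
  rw [← Finset.sum_mul, ← mul_assoc]
  exact hA χ (f χ)

lemma BoundedBelow.le_norm_sq_sum_apply_of_mem {δ : ℝ} {A X : ι → V →L[ℝ] V}
    (hA : BoundedBelow δ (fun j => A j)) (hX : ∀ j, (X j).IsSymmetric)
    (hXX : ∀ j k, Commute (X j) (X k)) (hAX : ∀ j k, Commute (A j) (X k)) {G : Submodule ℝ V}
    [FiniteDimensional ℝ G] (hAG : ∀ j, ∀ v ∈ G, A j v ∈ G) (hXG : ∀ j, ∀ v ∈ G, X j v ∈ G)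
    {v : V} (hv : v ∈ G) : δ * ∑ j, ‖X j v‖ ^ 2 ≤ ‖∑ j, A j (X j v)‖ ^ 2 := by
  have restricted : BoundedBelow δ fun j => (A j : V →ₗ[ℝ] V).restrict (hAG j) := fun l w => by
    simpa using hA l w
  have := restricted.le_norm_sq_sum_apply (X := fun j => (X j : V →ₗ[ℝ] V).restrict (hXG j))
    (fun j => (hX j).restrict_invariant _)
    (fun j k => LinearMap.ext fun w => Subtype.ext (DFunLike.congr_fun (hXX j k).eq (w : V)))
    (fun j k => LinearMap.ext fun w => Subtype.ext (DFunLike.congr_fun (hAX j k).eq (w : V)))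
    ⟨v, hv⟩
  simpa using this

lemma hasSum_norm_sq {κ V : Type*} [NormedAddCommGroup V] (u : SquareSummable κ V) :
    HasSum (fun β => ‖u β‖ ^ 2) (‖u‖ ^ 2) := by
  simpa using lp.hasSum_norm (p := 2) (by norm_num) u

lemma BoundedBelow.fiberwiseHom {κ : Type*} {δ : ℝ} {A : ι → V →L[ℝ] V}
    (hA : BoundedBelow δ (fun j => A j)) :
    BoundedBelow δ (fun j => HurwitzRadon.fiberwiseHom κ V (A j)) := fun l u => by
  refine hasSum_le (fun β => ?_) ((hasSum_norm_sq u).mul_left _) (hasSum_norm_sq _)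
  have apply_sum : (∑ j, l j • HurwitzRadon.fiberwiseHom κ V (A j) u) β =
      ∑ j, l j • A j (u β) := by
    rw [lp.coeFn_sum, Finset.sum_apply]
    rfl
  rw [apply_sum]
  exact hA l (u β)

end BoundedBelow

section Box

variable {ι : Type*} [DecidableEq ι]

/-- `√k` cut off at `m`; with these coefficients the ladder operators preserve a box. -/
noncomputable def truncatedSqrt (m k : ℕ) : ℝ := if k < m then √k else 0

lemma abs_truncatedSqrt_le (m k : ℕ) : |truncatedSqrt m k| ≤ √m := by
  unfold truncatedSqrt
  split_ifs with h
  · rw [abs_of_nonneg (Real.sqrt_nonneg _)]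
    exact Real.sqrt_le_sqrt (mod_cast h.le)
  · simp

lemma truncatedSqrt_of_lt {m k : ℕ} (h : k < m) : truncatedSqrt m k = √k := if_pos h

lemma lt_of_truncatedSqrt_ne_zero {m k : ℕ} (h : truncatedSqrt m k ≠ 0) : k < m := by
  contrapose! h
  exact if_neg h.not_gt

lemma mem_of_truncatedSqrt_count_ne_zero {m : ℕ} {j : ι} {β : Multiset ι}
    (h : truncatedSqrt m (β.count j) ≠ 0) : j ∈ β :=
  Multiset.count_ne_zero.1 fun h0 => h (by simp [truncatedSqrt, h0])

/-- The annihilation operator without normalisation, truncated so as to preserve `box m`. -/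
noncomputable def boxAnnihilation (m : ℕ) (j : ι) : WeightedShift (Multiset ι) where
  source β := j ::ₘ β
  weight β := truncatedSqrt m (β.count j + 1)
  bounded := ⟨√m, fun _ => abs_truncatedSqrt_le _ _⟩
  injOn := (cons_injective j).injOn

/-- The adjoint of `boxAnnihilation m j`. -/
noncomputable def boxCreation (m : ℕ) (j : ι) : WeightedShift (Multiset ι) where
  source β := β.erase j
  weight β := truncatedSqrt m (β.count j)
  bounded := ⟨√m, fun _ => abs_truncatedSqrt_le _ _⟩
  injOn := (injOn_erase j).mono fun _ => mem_of_truncatedSqrt_count_ne_zero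

lemma boxCreation_reverses_boxAnnihilation (m : ℕ) (j : ι) :
    (boxCreation m j).Reverses (boxAnnihilation m j) := fun β _ =>
  ⟨Multiset.erase_cons_head j β, by simp [boxCreation, boxAnnihilation]⟩

lemma boxAnnihilation_reverses_boxCreation (m : ℕ) (j : ι) :
    (boxAnnihilation m j).Reverses (boxCreation m j) := fun β hβ => by
  have mem := mem_of_truncatedSqrt_count_ne_zero hβ
  refine ⟨Multiset.cons_erase mem, ?_⟩
  simp [boxCreation, boxAnnihilation, Nat.sub_add_cancel (Multiset.count_pos.2 mem)]

/-- The states with all occupation numbers below `m`. -/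
def box (ι : Type*) [DecidableEq ι] (m : ℕ) : Set (Multiset ι) := {β | ∀ i, β.count i < m}

lemma finite_box [Finite ι] (m : ℕ) : (box ι m).Finite := by
  cases nonempty_fintype ι
  refine (Set.finite_Iic (m • (Finset.univ : Finset ι).val)).subset fun β hβ => ?_
  exact Multiset.le_iff_count.2 fun j => by simpa using (hβ j).le

variable (E : Type*) [NormedAddCommGroup E] [InnerProductSpace ℝ E]

/-- The truncated position operator: the sum of the truncated ladder operators. -/
noncomputable def boxPosition (m : ℕ) (j : ι) :
    SquareSummable (Multiset ι) E →L[ℝ] SquareSummable (Multiset ι) E :=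
  (boxAnnihilation m j).op E + (boxCreation m j).op E

lemma commute_boxAnnihilation_boxCreation (m : ℕ) {j k : ι} (h : j ≠ k) :
    Commute ((boxAnnihilation m j).op E) ((boxCreation m k).op E) :=
  WeightedShift.commute_op (fun β => Multiset.erase_cons_tail β h) fun β => by
    simp [boxAnnihilation, boxCreation, h, h.symm, mul_comm]

lemma commute_boxPosition (m : ℕ) (j k : ι) :
    Commute (boxPosition E m j) (boxPosition E m k) := by
  rcases eq_or_ne j k with rfl | h
  · rfl
  have annihilation_comm : Commute ((boxAnnihilation m j).op E) ((boxAnnihilation m k).op E) :=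
    WeightedShift.commute_op (fun β => Multiset.cons_swap k j β) fun β => by
      simp [boxAnnihilation, h, h.symm, mul_comm]
  have creation_comm : Commute ((boxCreation m j).op E) ((boxCreation m k).op E) :=
    WeightedShift.commute_op (fun β => Multiset.erase_comm β j k) fun β => by
      simp [boxCreation, h, h.symm, mul_comm]
  exact (annihilation_comm.add_right (commute_boxAnnihilation_boxCreation E m h)).add_left
    ((commute_boxAnnihilation_boxCreation E m h.symm).symm.add_right creation_comm)

lemma isSelfAdjoint_boxPosition [CompleteSpace E] (m : ℕ) (j : ι) :
    IsSelfAdjoint (boxPosition E m j) := by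
  rw [IsSelfAdjoint, boxPosition, star_add, add_comm,
    WeightedShift.star_op (boxCreation_reverses_boxAnnihilation m j)
      (boxAnnihilation_reverses_boxCreation m j),
    WeightedShift.star_op (boxAnnihilation_reverses_boxCreation m j)
      (boxCreation_reverses_boxAnnihilation m j)]

lemma commute_boxPosition_projOn_box (m : ℕ) (j : ι) :
    Commute (boxPosition E m j) (projOn E (box ι m)) := by
  refine SemiconjBy.add_left
    (WeightedShift.semiconjBy_projOn _ fun β hβ => forall_congr' fun i => ?_)
    (WeightedShift.semiconjBy_projOn _ fun β hβ => forall_congr' fun i => ?_)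
  · rcases eq_or_ne i j with rfl | h
    · have := lt_of_truncatedSqrt_ne_zero hβ
      simp only [boxAnnihilation, Multiset.count_cons_self]
      omega
    · simp [boxAnnihilation, h]
  · rcases eq_or_ne i j with rfl | h
    · have := lt_of_truncatedSqrt_ne_zero hβ
      simp only [boxCreation, Multiset.count_erase_self]
      omega
    · simp [boxCreation, h]

lemma commute_fiberwiseHom_boxPosition (M : E →L[ℝ] E) (m : ℕ) (j : ι) :
    Commute (fiberwiseHom (Multiset ι) E M) (boxPosition E m j) :=
  (commute_fiberwiseHom_op M _).add_right (commute_fiberwiseHom_op M _)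

/-- The position operator `(a_j + a_j*) (1 + N)^(-1/2)`. -/
noncomputable def position (j : ι) :
    SquareSummable (Multiset ι) E →L[ℝ] SquareSummable (Multiset ι) E :=
  (annihilation j).op E + (creationRight j).op E

/-- The operator `(1 + N)^(-1/2)`. -/
noncomputable def normalization (ι : Type*) : WeightedShift (Multiset ι) where
  source := id
  weight β := 1 / √(1 + β.card)
  bounded := ⟨1, fun β => by
    simpa using abs_sqrt_div_sqrt_le_one (a := 1) (b := 1 + β.card) (by simp)⟩
  injOn := Function.injective_id.injOn

lemma position_eq_boxPosition_normalization {m : ℕ} {u : SquareSummable (Multiset ι) E}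
    (hu : ∀ β, u β ≠ 0 → ∀ i, β.count i + 1 < m) (j : ι) :
    position E j u = boxPosition E m j ((normalization ι).op E u) := by
  ext β
  simp only [position, boxPosition, _root_.add_apply, lp.coeFn_add, Pi.add_apply,
    WeightedShift.op_apply, smul_smul, annihilation, creationRight, boxAnnihilation, boxCreation,
    normalization, id]
  congr 1
  · by_cases h : u (j ::ₘ β) = 0
    · rw [h, smul_zero, smul_zero]
    · have count_lt := hu _ h j
      rw [Multiset.count_cons_self] at count_lt
      rw [truncatedSqrt_of_lt (by omega), Multiset.card_cons]
      push_cast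
      ring_nf
  · by_cases h : u (β.erase j) = 0
    · rw [h, smul_zero, smul_zero]
    by_cases hj : j ∈ β
    · have count_lt := hu _ h j
      rw [Multiset.count_erase_self] at count_lt
      rw [truncatedSqrt_of_lt (by omega), add_comm 1, card_erase_add_one_real hj, mul_one_div]
    · simp [truncatedSqrt, Multiset.count_eq_zero_of_notMem hj]

variable {E}

lemma BoundedBelow.le_norm_sq_sum_position_of_support [Fintype ι] [FiniteDimensional ℝ E] {δ : ℝ}
    {A : ι → E →L[ℝ] E} (hA : BoundedBelow δ (fun j => A j)) {m : ℕ}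
    {u : SquareSummable (Multiset ι) E} (hu : ∀ β, u β ≠ 0 → ∀ i, β.count i + 1 < m) :
    δ * ∑ j, ‖position E j u‖ ^ 2 ≤
      ‖∑ j, HurwitzRadon.fiberwiseHom (Multiset ι) E (A j) (position E j u)‖ ^ 2 := by
  have := FiniteDimensional.complete ℝ E
  simp only [position_eq_boxPosition_normalization E hu]
  let P := projOn E (box ι m)
  let G := LinearMap.range P.toLinearMap
  have finite_range : P.toLinearMap.HasFiniteRange :=
    hasFiniteRange_of_finite_support (finite_box m) fun u β hβ => by simp [P, projOn_apply, hβ]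
  have : FiniteDimensional ℝ G := Module.Finite.iff_fg.2 finite_range
  have range_invariant {T : SquareSummable (Multiset ι) E →L[ℝ] SquareSummable (Multiset ι) E}
      (hT : Commute T P) : ∀ v ∈ G, T v ∈ G := by
    rintro _ ⟨w, rfl⟩
    exact ⟨T w, (DFunLike.congr_fun hT.eq w).symm⟩
  refine hA.fiberwiseHom.le_norm_sq_sum_apply_of_mem (G := G)
    (fun j => (isSelfAdjoint_boxPosition E m j).isSymmetric) (commute_boxPosition E m)
    (fun j k => commute_fiberwiseHom_boxPosition E (A j) m k)
    (fun j => range_invariant (commute_fiberwiseHom_op (A j) _))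
    (fun j => range_invariant (commute_boxPosition_projOn_box E m j))
    ⟨(normalization ι).op E u, ?_⟩
  ext β
  by_cases hβ : β ∈ box ι m
  · simp [P, projOn_apply, hβ]
  · have : u β = 0 := by
      contrapose! hβ
      exact fun i => Nat.lt_of_succ_lt (hu β hβ i)
    simp [P, projOn_apply, hβ, normalization, this]

theorem BoundedBelow.le_norm_sq_sum_position [Fintype ι] [FiniteDimensional ℝ E] {δ : ℝ}
    {A : ι → E →L[ℝ] E} (hA : BoundedBelow δ (fun j => A j)) (u : SquareSummable (Multiset ι) E) :
    δ * ∑ j, ‖position E j u‖ ^ 2 ≤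
      ‖∑ j, HurwitzRadon.fiberwiseHom (Multiset ι) E (A j) (position E j u)‖ ^ 2 := by
  classical
  have partial_sums := lp.hasSum_single (E := fun _ : Multiset ι => E) (p := 2) (by norm_num) u
  have left_continuous : Continuous fun u : SquareSummable (Multiset ι) E =>
    δ * ∑ j, ‖position E j u‖ ^ 2 := by fun_prop
  have right_continuous : Continuous fun u : SquareSummable (Multiset ι) E =>
    ‖∑ j, HurwitzRadon.fiberwiseHom (Multiset ι) E (A j) (position E j u)‖ ^ 2 := by fun_prop
  refine le_of_tendsto_of_tendsto' ((left_continuous.tendsto u).comp partial_sums)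
    ((right_continuous.tendsto u).comp partial_sums) fun s =>
    hA.le_norm_sq_sum_position_of_support (m := s.sup Multiset.card + 2) fun β hβ i => ?_
  have mem : β ∈ s := by
    contrapose! hβ
    rw [lp.coeFn_sum, Finset.sum_apply]
    exact Finset.sum_eq_zero fun γ hγ => lp.single_apply_ne _ _ _ fun h => hβ (h ▸ hγ)
  have := Finset.le_sup (f := Multiset.card) mem
  have := Multiset.count_le_card i β
  omega

end Box

/-! ### Fredholm property of the Clifford operator -/

section Ring

variable {ι R : Type*} [Ring R]

lemma sum_mul_self_of_anticomm [Fintype ι] {x : ι → R}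
    (hx : ∀ ⦃j k⦄, j ≠ k → x j * x k = -(x k * x j)) :
    (∑ j, x j) * ∑ j, x j = ∑ j, x j * x j := by
  classical
  have offDiag_cancel : ∑ i ∈ Finset.univ.offDiag, x i.1 * x i.2 = 0 := by
    refine Finset.sum_involution (fun i _ => i.swap) (fun i hi => ?_) (fun i hi _ h => ?_)
      (fun i hi => ?_) fun i _ => i.swap_swap
    · simp [hx (Finset.mem_offDiag.1 hi).2.2]
    · exact (Finset.mem_offDiag.1 hi).2.2 (congrArg Prod.snd h)
    · simpa [eq_comm] using hi
  rw [Finset.sum_mul_sum, ← Finset.sum_product', ← Finset.diag_union_offDiag,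
    Finset.sum_union (Finset.disjoint_diag_offDiag _), offDiag_cancel, add_zero, Finset.sum_diag]

/-- The relations `γ_j γ_k + γ_k γ_j = 2 δ_jk` of a Clifford algebra. -/
structure IsClifford (γ : ι → R) : Prop where
  mul_self : ∀ j, γ j * γ j = 1
  anticomm : ∀ ⦃j k⦄, j ≠ k → γ j * γ k = -(γ k * γ j)

lemma IsClifford.neg {γ : ι → R} (hγ : IsClifford γ) : IsClifford fun j => -γ j where
  mul_self j := by rw [neg_mul_neg, hγ.mul_self]
  anticomm j k h := by rw [neg_mul_neg, neg_mul_neg, hγ.anticomm h]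

lemma IsClifford.map {S : Type*} [Ring S] {γ : ι → R} (hγ : IsClifford γ) (φ : R →+* S) :
    IsClifford fun j => φ (γ j) where
  mul_self j := by rw [← map_mul, hγ.mul_self, map_one]
  anticomm j k h := by rw [← map_mul, ← map_mul, hγ.anticomm h, map_neg]

lemma IsClifford.sum_mul_mul_self [Fintype ι] {γ y : ι → R} (hγ : IsClifford γ)
    (hγy : ∀ j k, Commute (γ j) (y k)) (hy : ∀ j k, Commute (y j) (y k)) :
    (∑ j, γ j * y j) * ∑ j, γ j * y j = ∑ j, y j * y j := by
  have mul_mul (j k : ι) : γ j * y j * (γ k * y k) = γ j * γ k * (y j * y k) :=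
    (hγy k j).symm.mul_mul_mul_comm _ _
  rw [sum_mul_self_of_anticomm fun j k h => by
    rw [mul_mul, mul_mul, hγ.anticomm h, (hy j k).eq, neg_mul]]
  simp only [mul_mul, hγ.mul_self, one_mul]

end Ring

section Parity

variable {𝕜 V : Type*} [NontriviallyNormedField 𝕜] [NormedAddCommGroup V] [NormedSpace 𝕜 V]

/-- The index of the component from the range of the idempotent `p` to that of `1 - p`. -/
noncomputable def evenIndex (p T : V →L[𝕜] V) : ℤ := index (corner p (1 - p) T)

/-- The index of the component from the range of the idempotent `1 - p` to that of `p`. -/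
noncomputable def oddIndex (p T : V →L[𝕜] V) : ℤ := index (corner (1 - p) p T)

lemma semiconjBy_one_sub_swap {R : Type*} [Ring R] {p T : R} (hT : SemiconjBy T p (1 - p)) :
    SemiconjBy T (1 - p) p := by
  simpa using (SemiconjBy.one_right T).sub_right hT

variable [CompleteSpace V] {p S T : V →L[𝕜] V}

lemma oddIndex_add_evenIndex_eq_zero (hp : IsIdempotentElem p) (hS : SemiconjBy S p (1 - p))
    (hT : SemiconjBy T p (1 - p)) (hS_unit : IsUnit (calkin 𝕜 V S))
    (hT_unit : IsUnit (calkin 𝕜 V T)) {g : (V →L[𝕜] V)ˣ} (hg : Commute g.1 p)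
    (hST : calkin 𝕜 V S * calkin 𝕜 V T = calkin 𝕜 V g.1) :
    oddIndex p S + evenIndex p T = 0 := by
  have hS' := semiconjBy_one_sub_swap hS
  rw [oddIndex, evenIndex, ← index_corner_mul hp hp.one_sub hp hS' hS_unit hT hT_unit,
    index_corner_congr hp hp (hS'.mul_left hT) hg (g.isUnit.map _) (by rw [map_mul, hST]),
    index_corner_units hp g hg]

theorem oddIndex_add_evenIndex_comm (hp : IsIdempotentElem p) (hS : SemiconjBy S p (1 - p))
    (hT : SemiconjBy T p (1 - p)) (hS_unit : IsUnit (calkin 𝕜 V S))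
    (hT_unit : IsUnit (calkin 𝕜 V T)) (hST : Commute (calkin 𝕜 V S) (calkin 𝕜 V T)) :
    oddIndex p S + evenIndex p T = oddIndex p T + evenIndex p S := by
  have hS' := semiconjBy_one_sub_swap hS
  have hT' := semiconjBy_one_sub_swap hT
  rw [oddIndex, evenIndex, oddIndex, evenIndex,
    ← index_corner_mul hp hp.one_sub hp hS' hS_unit hT hT_unit,
    ← index_corner_mul hp hp.one_sub hp hT' hT_unit hS hS_unit]
  exact index_corner_congr hp hp (hS'.mul_left hT) (hT'.mul_left hS)
    (by rw [map_mul]; exact hT_unit.mul hS_unit) (by rw [map_mul, map_mul, hST.eq])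

end Parity

section Hilbert

open ContinuousLinearMap

variable {V : Type*} [NormedAddCommGroup V] [InnerProductSpace ℝ V] [CompleteSpace V]

lemma hasFiniteRange_star {R : V →L[ℝ] V} (hR : R.toLinearMap.HasFiniteRange) :
    (star R).toLinearMap.HasFiniteRange := by
  let G := LinearMap.range R.toLinearMap
  have : FiniteDimensional ℝ G := Module.Finite.iff_fg.2 hR
  have projection_mul : G.starProjection * R = R := by
    ext v
    exact Submodule.starProjection_eq_self_iff.2 (LinearMap.mem_range_self _ v)
  have mul_projection : star R * G.starProjection = star R := by
    conv_rhs => rw [← projection_mul, star_mul, isSelfAdjoint_starProjection G]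
  have finite : G.starProjection.toLinearMap.HasFiniteRange := by
    rw [LinearMap.HasFiniteRange, Submodule.range_starProjection]
    exact hR
  rw [← mul_projection]
  exact finite.comp_left _

lemma IsApproximable.star {T : V →L[ℝ] V} (hT : IsApproximable T) : IsApproximable (star T) :=
  map_mem_closure continuous_star hT fun _ => hasFiniteRange_star

lemma inner_star_mul_self_apply (T : V →L[ℝ] V) (u : V) :
    inner ℝ ((star T * T) u) u = ‖T u‖ ^ 2 := by
  rw [mul_apply_eq_comp, star_eq_adjoint, adjoint_inner_left, real_inner_self_eq_norm_sq]

/-- The operator differs from `star f * f + ∑ j, star (Y j) * Y j` only by a multiple of the error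
in `∑ j, (|X j|² + |Y j|²) = 4`, and subtracting it makes the operator at least `4 μ`. -/
lemma isUnit_of_le_norm_sq {ι : Type*} [Fintype ι] {f : V →L[ℝ] V} {X Y : ι → V →L[ℝ] V}
    {δ μ : ℝ} (hμ : 0 < μ) (hμ_one : μ ≤ 1) (hμδ : μ ≤ δ)
    (hf : ∀ u, δ * ∑ j, ‖X j u‖ ^ 2 ≤ ‖f u‖ ^ 2) :
    IsUnit (star f * f + ∑ j, star (Y j) * Y j -
      μ • (∑ j, star (X j) * X j + ∑ j, star (Y j) * Y j - 4)) := by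
  refine isUnit_of_forall_le_norm_inner_map _ (c := ⟨4 * μ, by positivity⟩)
    (show (0 : ℝ) < 4 * μ by positivity) fun u => le_trans ?_ (le_abs_self _)
  have four_apply : (4 : V →L[ℝ] V) u = (4 : ℝ) • u := by
    rw [← Nat.cast_ofNat, ← nsmul_one, ← Nat.cast_smul_eq_nsmul ℝ]
    rfl
  have X_nonneg : 0 ≤ ∑ j, ‖X j u‖ ^ 2 := Finset.sum_nonneg fun _ _ => by positivity
  have Y_nonneg : 0 ≤ ∑ j, ‖Y j u‖ ^ 2 := Finset.sum_nonneg fun _ _ => by positivity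
  simp only [_root_.add_apply, _root_.sub_apply, _root_.sum_apply, _root_.smul_apply,
    inner_add_left, inner_sub_left, sum_inner, real_inner_smul_left, inner_star_mul_self_apply,
    four_apply, real_inner_self_eq_norm_sq]
  change ‖u‖ ^ 2 * (4 * μ) ≤ _
  nlinarith [hf u, mul_le_mul_of_nonneg_right hμδ X_nonneg,
    mul_le_mul_of_nonneg_right hμ_one Y_nonneg]

end Hilbert

section Calkin

variable {ι : Type*} [DecidableEq ι] (E : Type*) [NormedAddCommGroup E] [InnerProductSpace ℝ E]

/-- The momentum operator without its factor `i`, normalised like the ladder operators. -/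
noncomputable def momentum (j : ι) :
    SquareSummable (Multiset ι) E →L[ℝ] SquareSummable (Multiset ι) E :=
  (annihilation j).op E - (creation j).op E

lemma commute_fiberwiseHom_position (M : E →L[ℝ] E) (j : ι) :
    Commute (fiberwiseHom (Multiset ι) E M) (position E j) :=
  (commute_fiberwiseHom_op M _).add_right (commute_fiberwiseHom_op M _)

lemma commute_fiberwiseHom_momentum (M : E →L[ℝ] E) (j : ι) :
    Commute (fiberwiseHom (Multiset ι) E M) (momentum E j) :=
  (commute_fiberwiseHom_op M _).sub_right (commute_fiberwiseHom_op M _)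

lemma star_momentum [CompleteSpace E] (j : ι) : star (momentum E j) = -momentum E j := by
  rw [momentum, star_sub, ← star_annihilation, star_star, neg_sub]

lemma odd_momentum (j : ι) : SemiconjBy (momentum E j) (evenProj ι E) (1 - evenProj ι E) :=
  (odd_annihilation E j).sub_left (odd_creation E j)

lemma odd_creationRight (j : ι) :
    SemiconjBy ((creationRight j).op E) (evenProj ι E) (1 - evenProj ι E) := by
  rw [evenProj, one_sub_projOn]
  exact (creationRight j).semiconjBy_projOn fun β hβ => by
    have mem : j ∈ β := mem_of_sqrt_count_ne_zero (div_ne_zero_iff.1 hβ).1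
    simp [creationRight, ← Multiset.card_erase_add_one mem, Nat.even_add_one]

lemma odd_position (j : ι) : SemiconjBy (position E j) (evenProj ι E) (1 - evenProj ι E) :=
  (odd_annihilation E j).add_left (odd_creationRight E j)

local notation "π" => calkin ℝ (SquareSummable (Multiset ι) E)

lemma calkin_momentum (j : ι) :
    π (momentum E j) = π ((annihilation j).op E) - π ((creation j).op E) :=
  map_sub _ _ _

variable [FiniteDimensional ℝ E] [Finite ι]

lemma calkin_commute_annihilation_creation (j k : ι) :
    Commute (π ((annihilation j).op E)) (π ((creation k).op E)) := by
  rw [Commute, SemiconjBy, ← map_mul, ← map_mul, calkin_eq_iff]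
  exact isApproximable_commutator E j k

lemma calkin_position (j : ι) :
    π (position E j) = π ((annihilation j).op E) + π ((creation j).op E) := by
  rw [position, map_add, calkin_eq_iff.2 (isApproximable_creationRight_sub_creation E j)]

lemma calkin_star_position [CompleteSpace E] (j : ι) :
    π (star (position E j)) = π (position E j) := by
  have approximable := (isApproximable_creationRight_sub_creation E j).star
  rw [star_sub, ← star_annihilation, star_star] at approximable
  rw [calkin_position, position, star_add, map_add, calkin_eq_iff.2 approximable,
    star_annihilation, add_comm]

lemma calkin_commute_position_annihilation (j k : ι) :
    Commute (π (position E j)) (π ((annihilation k).op E)) := by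
  rw [calkin_position]
  exact ((commute_annihilation E j k).map π).add_left
    (calkin_commute_annihilation_creation E k j).symm

lemma calkin_commute_momentum_annihilation (j k : ι) :
    Commute (π (momentum E j)) (π ((annihilation k).op E)) := by
  rw [calkin_momentum]
  exact ((commute_annihilation E j k).map π).sub_left
    (calkin_commute_annihilation_creation E k j).symm

lemma calkin_commute_position_creation (j k : ι) :
    Commute (π (position E j)) (π ((creation k).op E)) := by
  have := FiniteDimensional.complete ℝ E
  rw [calkin_position]
  exact (calkin_commute_annihilation_creation E j k).add_left ((commute_creation E j k).map π)

lemma calkin_commute_momentum_creation (j k : ι) :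
    Commute (π (momentum E j)) (π ((creation k).op E)) := by
  have := FiniteDimensional.complete ℝ E
  rw [calkin_momentum]
  exact (calkin_commute_annihilation_creation E j k).sub_left ((commute_creation E j k).map π)

lemma calkin_commute_position_momentum (j k : ι) :
    Commute (π (position E j)) (π (momentum E k)) := by
  rw [calkin_momentum]
  exact (calkin_commute_position_annihilation E j k).sub_right
    (calkin_commute_position_creation E j k)

lemma calkin_commute_momentum (j k : ι) : Commute (π (momentum E j)) (π (momentum E k)) := by
  rw [calkin_momentum E k]
  exact (calkin_commute_momentum_annihilation E j k).sub_right
    (calkin_commute_momentum_creation E j k)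

end Calkin

section Fredholm

variable {ι : Type*} [DecidableEq ι] [Fintype ι] (E : Type*) [NormedAddCommGroup E]
  [InnerProductSpace ℝ E] [FiniteDimensional ℝ E]

local notation "π" => calkin ℝ (SquareSummable (Multiset ι) E)

lemma calkin_sum_creation_mul_annihilation :
    ∑ j, π ((creation j).op E) * π ((annihilation j).op E) = 1 := by
  simp only [← map_mul, ← map_sum]
  rw [← map_one π, calkin_eq_iff]
  exact isApproximable_sum_creation_mul_annihilation_sub_one E

lemma calkin_sum_position_sq_sub_sum_momentum_sq :
    ∑ j, π (position E j) * π (position E j) - ∑ j, π (momentum E j) * π (momentum E j) = 4 := by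
  have term (j : ι) : π (position E j) * π (position E j) - π (momentum E j) * π (momentum E j) =
      4 * (π ((creation j).op E) * π ((annihilation j).op E)) := by
    have comm := (calkin_commute_annihilation_creation E j j).eq
    rw [calkin_position, calkin_momentum, add_mul, mul_add, mul_add, sub_mul, mul_sub, mul_sub,
      comm]
    noncomm_ring
  rw [← Finset.sum_sub_distrib]
  simp only [term]
  rw [← Finset.mul_sum, calkin_sum_creation_mul_annihilation, mul_one]

end Fredholm

lemma commute_star_mul_self {R : Type*} [Ring R] [StarRing R] {p T : R} (hp : IsSelfAdjoint p)
    (hT : SemiconjBy T p (1 - p)) : Commute (star T * T) p := by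
  have star_odd : SemiconjBy (star T) (1 - p) p := by
    have := congrArg star hT.eq
    rw [star_mul, star_mul, star_sub, star_one, hp.star_eq] at this
    exact this.symm
  exact star_odd.mul_left hT

lemma isSelfAdjoint_evenProj {ι E : Type*} [NormedAddCommGroup E] [InnerProductSpace ℝ E]
    [CompleteSpace E] : IsSelfAdjoint (evenProj ι E) :=
  WeightedShift.star_op (fun _ _ => ⟨rfl, rfl⟩) fun _ _ => ⟨rfl, rfl⟩

section Dirac

variable {ι : Type*} [Fintype ι] {E : Type*} [NormedAddCommGroup E] [InnerProductSpace ℝ E]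

/-- The matrices `γ` and `A` define an elliptic Dirac operator: its symbol
`∑ j, ξ j γ j + ∑ j, l j A j` is invertible away from the origin. -/
structure IsElliptic [CompleteSpace E] (γ A : ι → E →L[ℝ] E) : Prop where
  isClifford : IsClifford γ
  isSelfAdjoint : ∀ j, IsSelfAdjoint (A j)
  commute : ∀ j k, Commute (γ j) (A k)
  boundedBelow : ∃ δ > 0, BoundedBelow δ (fun j => A j)

lemma IsElliptic.neg [CompleteSpace E] {γ A : ι → E →L[ℝ] E} (h : IsElliptic γ A) :
    IsElliptic (fun j => -γ j) A :=
  ⟨h.isClifford.neg, h.isSelfAdjoint, fun j k => (h.commute j k).neg_left, h.boundedBelow⟩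

lemma odd_sum_fiberwiseHom_mul (M : ι → E →L[ℝ] E)
    {T : ι → SquareSummable (Multiset ι) E →L[ℝ] SquareSummable (Multiset ι) E}
    (hT : ∀ j, SemiconjBy (T j) (evenProj ι E) (1 - evenProj ι E)) :
    SemiconjBy (∑ j, fiberwiseHom (Multiset ι) E (M j) * T j) (evenProj ι E)
      (1 - evenProj ι E) := by
  refine Finset.sum_induction _ (SemiconjBy · (evenProj ι E) (1 - evenProj ι E))
    (fun _ _ => SemiconjBy.add_left) (SemiconjBy.zero_left _ _) fun j _ => ?_
  exact SemiconjBy.mul_left ((Commute.one_right _).sub_right (even_fiberwiseHom E (M j))) (hT j)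

variable [DecidableEq ι]

/-- The part `∑ j, γ j ∂ j` of the Dirac operator. -/
noncomputable def kinetic (γ : ι → E →L[ℝ] E) :
    SquareSummable (Multiset ι) E →L[ℝ] SquareSummable (Multiset ι) E :=
  ∑ j, fiberwiseHom (Multiset ι) E (γ j) * momentum E j

/-- The part `∑ j, A j x j` of the Dirac operator. -/
noncomputable def potential (A : ι → E →L[ℝ] E) :
    SquareSummable (Multiset ι) E →L[ℝ] SquareSummable (Multiset ι) E :=
  ∑ j, fiberwiseHom (Multiset ι) E (A j) * position E j

/-- The Dirac operator `∑ j, γ j ∂ j + ∑ j, A j x j`, made bounded by the normalisation of the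
ladder operators. -/
noncomputable def dirac (γ A : ι → E →L[ℝ] E) :
    SquareSummable (Multiset ι) E →L[ℝ] SquareSummable (Multiset ι) E :=
  potential A + kinetic γ

lemma dirac_neg (γ A : ι → E →L[ℝ] E) :
    dirac (fun j => -γ j) A = potential A - kinetic γ := by
  simp only [dirac, kinetic, map_neg, neg_mul, Finset.sum_neg_distrib, sub_eq_add_neg]

lemma odd_potential (A : ι → E →L[ℝ] E) :
    SemiconjBy (potential A) (evenProj ι E) (1 - evenProj ι E) :=
  odd_sum_fiberwiseHom_mul A (odd_position E)

lemma odd_dirac (γ A : ι → E →L[ℝ] E) :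
    SemiconjBy (dirac γ A) (evenProj ι E) (1 - evenProj ι E) :=
  (odd_potential A).add_left (odd_sum_fiberwiseHom_mul γ (odd_momentum E))

local notation "π" => calkin ℝ (SquareSummable (Multiset ι) E)

variable [FiniteDimensional ℝ E]

lemma calkin_star_potential [CompleteSpace E] {A : ι → E →L[ℝ] E}
    (hA : ∀ j, IsSelfAdjoint (A j)) : π (star (potential A)) = π (potential A) := by
  simp only [potential, star_sum, star_mul, star_fiberwiseHom, (hA _).star_eq, map_sum, map_mul,
    calkin_star_position]
  exact Finset.sum_congr rfl fun j _ => ((commute_fiberwiseHom_position E (A j) j).map π).symm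

omit [DecidableEq ι] [FiniteDimensional ℝ E] in
lemma calkin_commute_sum_fiberwiseHom_mul {M N : ι → E →L[ℝ] E}
    {X Y : ι → SquareSummable (Multiset ι) E →L[ℝ] SquareSummable (Multiset ι) E}
    (hMN : ∀ j k, Commute (M j) (N k))
    (hX : ∀ N j, Commute (fiberwiseHom (Multiset ι) E N) (X j))
    (hY : ∀ M j, Commute (fiberwiseHom (Multiset ι) E M) (Y j))
    (hXY : ∀ j k, Commute (π (X j)) (π (Y k))) :
    Commute (π (∑ j, fiberwiseHom (Multiset ι) E (M j) * X j))
      (π (∑ j, fiberwiseHom (Multiset ι) E (N j) * Y j)) := by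
  simp only [map_sum, map_mul]
  refine .sum_left _ _ _ fun j _ => .sum_right _ _ _ fun k _ => ?_
  exact ((((hMN j k).map (fiberwiseHom (Multiset ι) E)).map π).mul_right
    ((hY (M j) k).map π)).mul_left (((hX (N k) j).map π).symm.mul_right (hXY j k))

lemma calkin_commute_potential_kinetic {γ A : ι → E →L[ℝ] E} (h : ∀ j k, Commute (γ j) (A k)) :
    Commute (π (potential A)) (π (kinetic γ)) :=
  calkin_commute_sum_fiberwiseHom_mul (fun j k => (h k j).symm) (commute_fiberwiseHom_position E)
    (commute_fiberwiseHom_momentum E) (calkin_commute_position_momentum E)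

lemma calkin_kinetic_mul_self {γ : ι → E →L[ℝ] E} (hγ : IsClifford γ) :
    π (kinetic γ) * π (kinetic γ) = ∑ j, π (momentum E j) * π (momentum E j) := by
  simp only [kinetic, map_sum, map_mul]
  exact (hγ.map (RingHom.comp π (fiberwiseHom (Multiset ι) E))).sum_mul_mul_self
    (fun j k => (commute_fiberwiseHom_momentum E (γ j) k).map π) (calkin_commute_momentum E)

variable [CompleteSpace E]

namespace IsElliptic

variable {γ A : ι → E →L[ℝ] E}

lemma exists_even_unit (h : IsElliptic γ A) :
    ∃ g : (SquareSummable (Multiset ι) E →L[ℝ] SquareSummable (Multiset ι) E)ˣ,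
      Commute g.1 (evenProj ι E) ∧
      π (potential A) * π (potential A) - π (kinetic γ) * π (kinetic γ) = π g.1 := by
  obtain ⟨δ, δ_pos, hδ⟩ := h.boundedBelow
  let Q := ∑ j : ι, star (momentum E j) * momentum E j
  let Z := ∑ j : ι, star (position E j) * position E j + Q - 4
  have le_norm_sq (u : SquareSummable (Multiset ι) E) :
      δ * ∑ j, ‖position E j u‖ ^ 2 ≤ ‖potential A u‖ ^ 2 := by
    simpa [potential, _root_.sum_apply, mul_apply_eq_comp] using hδ.le_norm_sq_sum_position u
  have unit : IsUnit (star (potential A) * potential A + Q - min 1 δ • Z) :=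
    isUnit_of_le_norm_sq (lt_min one_pos δ_pos) (min_le_left _ _) (min_le_right _ _) le_norm_sq
  have even_of_odd {T} := commute_star_mul_self (T := T) (isSelfAdjoint_evenProj (ι := ι) (E := E))
  have even_Q : Commute Q (evenProj ι E) :=
    .sum_left _ _ _ fun j _ => even_of_odd (odd_momentum E j)
  have even_Z : Commute Z (evenProj ι E) :=
    ((Commute.sum_left _ _ _ fun j _ => even_of_odd (odd_position E j)).add_left
      even_Q).sub_left (Commute.ofNat_left 4 _)
  have calkin_Q : π Q = -(π (kinetic γ) * π (kinetic γ)) := by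
    simp only [Q, calkin_kinetic_mul_self h.isClifford, star_momentum, map_sum, map_mul, map_neg,
      neg_mul, Finset.sum_neg_distrib]
  have calkin_Z : π Z = 0 := by
    rw [map_sub, map_add, calkin_Q, calkin_kinetic_mul_self h.isClifford, ← sub_eq_add_neg]
    simp only [map_sum, map_mul, calkin_star_position]
    rw [calkin_sum_position_sq_sub_sum_momentum_sq, map_ofNat, sub_self]
  refine ⟨unit.unit, ((even_of_odd (odd_potential A)).add_left even_Q).sub_left
    (even_Z.smul_left _), ?_⟩
  rw [IsUnit.unit_spec, ← smul_one_mul, map_sub, map_mul, calkin_Z, mul_zero, sub_zero, map_add,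
    map_mul, calkin_star_potential h.isSelfAdjoint, calkin_Q, sub_eq_add_neg]

lemma calkin_dirac_neg_mul_dirac (h : IsElliptic γ A) :
    π (dirac (fun j => -γ j) A) * π (dirac γ A) =
      π (potential A) * π (potential A) - π (kinetic γ) * π (kinetic γ) := by
  rw [dirac_neg, dirac, map_sub, map_add,
    (calkin_commute_potential_kinetic h.commute).mul_self_sub_mul_self_eq']

lemma commute_calkin_dirac_neg_dirac (h : IsElliptic γ A) :
    Commute (π (dirac (fun j => -γ j) A)) (π (dirac γ A)) := by
  have comm := calkin_commute_potential_kinetic h.commute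
  rw [dirac_neg, dirac, map_sub, map_add]
  exact ((Commute.refl _).add_right comm).sub_left (comm.symm.add_right (Commute.refl _))

theorem isUnit_calkin_dirac (h : IsElliptic γ A) : IsUnit (π (dirac γ A)) := by
  obtain ⟨g, -, hg⟩ := h.exists_even_unit
  refine (h.commute_calkin_dirac_neg_dirac.isUnit_mul_iff.1 ?_).2
  rw [h.calkin_dirac_neg_mul_dirac, hg]
  exact g.isUnit.map π

theorem oddIndex_dirac_neg_add_evenIndex_dirac (h : IsElliptic γ A) :
    oddIndex (evenProj ι E) (dirac (fun j => -γ j) A) + evenIndex (evenProj ι E) (dirac γ A) =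
      0 := by
  obtain ⟨g, g_even, hg⟩ := h.exists_even_unit
  exact oddIndex_add_evenIndex_eq_zero (isIdempotentElem_evenProj E) (odd_dirac _ A)
    (odd_dirac γ A) h.neg.isUnit_calkin_dirac h.isUnit_calkin_dirac g_even
    (h.calkin_dirac_neg_mul_dirac.trans hg)

end IsElliptic

end Dirac

/-! ### The supersymmetric oscillator -/

section SelfAdjoint

open ContinuousLinearMap

variable {V : Type*} [NormedAddCommGroup V] [InnerProductSpace ℝ V] [CompleteSpace V]

lemma apply_eq_zero_of_add_star_apply_eq_zero {Q : V →L[ℝ] V} (hQ : Q * Q = 0) {u : V}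
    (hu : (Q + star Q) u = 0) : Q u = 0 ∧ star Q u = 0 := by
  have orthogonal : inner ℝ (Q u) (star Q u) = 0 := by
    rw [star_eq_adjoint, adjoint_inner_right, ← mul_apply_eq_comp, hQ, _root_.zero_apply,
      inner_zero_left]
  have norm_sq := norm_add_sq_eq_norm_sq_add_norm_sq_of_inner_eq_zero _ _ orthogonal
  rw [← _root_.add_apply, hu, norm_zero, mul_zero] at norm_sq
  constructor <;> rw [← norm_eq_zero] <;> nlinarith [norm_nonneg (Q u), norm_nonneg (star Q u)]

variable {p T : V →L[ℝ] V}

/-- The kernel of a self-adjoint operator is orthogonal to its range. -/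
lemma finrank_ker_corner_le_finrank_coker_corner (hp : IsIdempotentElem p)
    (hT : SemiconjBy T p (1 - p)) (hT_self : IsSelfAdjoint T)
    [FiniteDimensional ℝ (range (p : V →ₗ[ℝ] V) ⧸ range (corner (1 - p) p T))] :
    finrank ℝ (ker (corner p (1 - p) T)) ≤
      finrank ℝ (range (p : V →ₗ[ℝ] V) ⧸ range (corner (1 - p) p T)) := by
  refine LinearMap.finrank_le_finrank_of_injective
    (f := (range (corner (1 - p) p T)).mkQ ∘ₗ (ker (corner p (1 - p) T)).subtype)
    (LinearMap.ker_eq_bot.1 (LinearMap.ker_eq_bot'.2 fun v hv => ?_))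
  obtain ⟨w, hw⟩ := (Submodule.Quotient.mk_eq_zero _).1 hv
  have apply_w : T w = v :=
    (coe_corner_apply hp.one_sub (semiconjBy_one_sub_swap hT) w).symm.trans (congrArg _ hw)
  have apply_v : T v = 0 :=
    (coe_corner_apply hp hT v).symm.trans (congrArg Subtype.val (LinearMap.mem_ker.1 v.2))
  refine Subtype.ext (Subtype.ext (inner_self_eq_zero (𝕜 := ℝ).1 ?_))
  rw [← apply_w, ← hT_self.star_eq, star_eq_adjoint, adjoint_inner_left, ← star_eq_adjoint,
    hT_self.star_eq, apply_w, apply_v, inner_zero_right]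

theorem evenIndex_eq_finrank_ker (hp : IsIdempotentElem p) (hT : SemiconjBy T p (1 - p))
    (hT_self : IsSelfAdjoint T) (hT_sq : calkin ℝ V T * calkin ℝ V T = 1)
    (hT_inj : Function.Injective (corner (1 - p) p T)) :
    evenIndex p T = finrank ℝ (ker (corner p (1 - p) T)) ∧ oddIndex p T = -evenIndex p T := by
  have unit : IsUnit (calkin ℝ V T) := ⟨⟨_, _, hT_sq, hT_sq⟩, rfl⟩
  have index_sum : oddIndex p T + evenIndex p T = 0 :=
    oddIndex_add_evenIndex_eq_zero hp hT hT unit unit (g := 1) (Commute.one_left p)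
      (by rw [hT_sq, Units.val_one, map_one])
  have := (isFredholm_corner hp.one_sub hp (semiconjBy_one_sub_swap hT) unit).finite_coker
  have ker_le := finrank_ker_corner_le_finrank_coker_corner hp hT hT_self
  have odd_ker : finrank ℝ (ker (corner (1 - p) p T)) = 0 := by
    rw [LinearMap.ker_eq_bot.2 hT_inj, finrank_bot]
  unfold oddIndex evenIndex index at *
  lia

end SelfAdjoint

/-- The canonical anticommutation relations between the annihilation operators `a` and the
creation operators `b`. -/
structure IsCAR {ι R : Type*} [DecidableEq ι] [Ring R] (a b : ι → R) : Prop where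
  mul_self_left : ∀ j, a j * a j = 0
  mul_self_right : ∀ j, b j * b j = 0
  anticomm_left : ∀ ⦃j k⦄, j ≠ k → a j * a k = -(a k * a j)
  anticomm_right : ∀ ⦃j k⦄, j ≠ k → b j * b k = -(b k * b j)
  mul_add_mul : ∀ j k, a j * b k + b k * a j = if j = k then 1 else 0

lemma IsCAR.mul_star_add_star_mul {ι R : Type*} [DecidableEq ι] [Ring R] [StarRing R] {e : ι → R}
    (he : IsCAR e (star e)) (j k : ι) :
    e j * star (e k) + star (e k) * e j = if j = k then 1 else 0 :=
  he.mul_add_mul j k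

section Oscillator

variable {ι : Type*} [Fintype ι] [DecidableEq ι] {E : Type*} [NormedAddCommGroup E]
  [InnerProductSpace ℝ E]

omit [Fintype ι] [DecidableEq ι] in
lemma fiberwiseHom_mul_op_mul (M M' : E →L[ℝ] E) (W W' : WeightedShift (Multiset ι)) :
    fiberwiseHom (Multiset ι) E M * W.op E * (fiberwiseHom (Multiset ι) E M' * W'.op E) =
      fiberwiseHom (Multiset ι) E (M * M') * (W.op E * W'.op E) := by
  rw [map_mul]
  exact (commute_fiberwiseHom_op M' W).symm.mul_mul_mul_comm _ _

/-- The supercharge `∑ j, e j a_j`, where `a_j` is the normalised annihilation operator. -/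
noncomputable def supercharge (e : ι → E →L[ℝ] E) :
    SquareSummable (Multiset ι) E →L[ℝ] SquareSummable (Multiset ι) E :=
  ∑ j, fiberwiseHom (Multiset ι) E (e j) * (annihilation j).op E

variable [CompleteSpace E] {e : ι → E →L[ℝ] E}

/-- The sum of the supercharge and its adjoint. Its square is a normalised form of the
Hamiltonian `N + ∑ j, e j (e j)*`, where `N` is the degree. -/
noncomputable def oscillator (e : ι → E →L[ℝ] E) :
    SquareSummable (Multiset ι) E →L[ℝ] SquareSummable (Multiset ι) E :=
  supercharge e + star (supercharge e)

/-- The common kernel of the adjoints of the operators `e j`. -/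
noncomputable def vacuum (e : ι → E →L[ℝ] E) : Submodule ℝ E := ⨅ j, ker (star (e j)).toLinearMap

lemma star_supercharge (e : ι → E →L[ℝ] E) :
    star (supercharge e) =
      ∑ j, fiberwiseHom (Multiset ι) E (star (e j)) * (creation j).op E := by
  simp only [supercharge, star_sum, star_mul, star_fiberwiseHom, star_annihilation]
  exact Finset.sum_congr rfl fun j _ => (commute_fiberwiseHom_op _ _).symm

lemma supercharge_mul_self (he : IsCAR e (star e)) : supercharge e * supercharge e = 0 := by
  rw [supercharge, sum_mul_self_of_anticomm fun j k h => by
    rw [fiberwiseHom_mul_op_mul, fiberwiseHom_mul_op_mul, he.anticomm_left h,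
      (commute_annihilation E j k).eq, map_neg, neg_mul]]
  simp only [fiberwiseHom_mul_op_mul, he.mul_self_left, map_zero, zero_mul, Finset.sum_const_zero]

lemma isSelfAdjoint_oscillator (e : ι → E →L[ℝ] E) : IsSelfAdjoint (oscillator e) :=
  IsSelfAdjoint.add_star_self _

lemma odd_oscillator (e : ι → E →L[ℝ] E) :
    SemiconjBy (oscillator e) (evenProj ι E) (1 - evenProj ι E) := by
  rw [oscillator, star_supercharge]
  exact (odd_sum_fiberwiseHom_mul e (odd_annihilation E)).add_left
    (odd_sum_fiberwiseHom_mul _ (odd_creation E))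

lemma supercharge_mul_star (e : ι → E →L[ℝ] E) :
    supercharge e * star (supercharge e) = ∑ j, ∑ k,
      fiberwiseHom (Multiset ι) E (e j * star (e k)) *
        ((annihilation j).op E * (creation k).op E) := by
  rw [star_supercharge, supercharge, Finset.sum_mul_sum]
  simp only [fiberwiseHom_mul_op_mul]

lemma star_mul_supercharge (e : ι → E →L[ℝ] E) :
    star (supercharge e) * supercharge e = ∑ j, ∑ k,
      fiberwiseHom (Multiset ι) E (star (e k) * e j) *
        ((creation k).op E * (annihilation j).op E) := by
  rw [star_supercharge, supercharge, Finset.sum_mul_sum, Finset.sum_comm]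
  simp only [fiberwiseHom_mul_op_mul]

lemma hamiltonian_apply (he : IsCAR e (star e)) (u : SquareSummable (Multiset ι) E)
    (β : Multiset ι) :
    (2 + β.card : ℝ) • (supercharge e * star (supercharge e)) u β +
      (1 + β.card : ℝ) • (star (supercharge e) * supercharge e) u β =
      (β.card : ℝ) • u β + ∑ j, (e j * star (e j)) (u β) := by
  have term (j k : ι) :
      (2 + β.card : ℝ) •
          (e j * star (e k)) (((annihilation j).op E * (creation k).op E) u β) +
        (1 + β.card : ℝ) •
          (star (e k) * e j) (((creation k).op E * (annihilation j).op E) u β) =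
      if j = k then (β.count j : ℝ) • u β + (e j * star (e j)) (u β) else 0 := by
    rw [← map_smul, canonical_commutation_apply, ← map_smul (star (e k) * e j), map_add,
      add_right_comm, ← _root_.add_apply, he.mul_star_add_star_mul]
    split_ifs with h
    · subst h
      rw [creation_mul_annihilation_self_apply, smul_smul, mul_div_cancel₀ _ (by positivity)]
      rfl
    · rw [map_zero, add_zero, _root_.zero_apply]
  simp only [supercharge_mul_star, star_mul_supercharge, _root_.sum_apply, lp.coeFn_sum,
    Finset.sum_apply, mul_apply_eq_comp (fiberwiseHom _ _ _), fiberwiseHom_apply,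
    Finset.smul_sum, ← Finset.sum_add_distrib, term, Finset.sum_ite_eq, Finset.mem_univ, if_true]
  rw [Finset.sum_add_distrib, ← Finset.sum_smul, ← Nat.cast_sum,
    Multiset.sum_count_eq_card fun _ _ => Finset.mem_univ _]

lemma apply_of_oscillator_apply_eq_zero (he : IsCAR e (star e))
    {u : SquareSummable (Multiset ι) E}
    (hu : oscillator e u = 0) : u 0 ∈ vacuum e ∧ ∀ β ≠ 0, u β = 0 := by
  have ⟨hQ, hQ_star⟩ := apply_eq_zero_of_add_star_apply_eq_zero (supercharge_mul_self he) hu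
  have inner_nonneg (β : Multiset ι) : 0 ≤ ∑ j, ‖star (e j) (u β)‖ ^ 2 :=
    Finset.sum_nonneg fun _ _ => by positivity
  have energy (β : Multiset ι) : β.card * ‖u β‖ ^ 2 + ∑ j, ‖star (e j) (u β)‖ ^ 2 = 0 := by
    have apply_eq := congrArg (inner ℝ · (u β)) (hamiltonian_apply he u β)
    simp only [mul_apply_eq_comp, hQ, hQ_star, map_zero, lp.coeFn_zero, Pi.zero_apply, smul_zero,
      add_zero, inner_zero_left, inner_add_left, real_inner_smul_left, sum_inner,
      ← ContinuousLinearMap.adjoint_inner_right (e _), ← ContinuousLinearMap.star_eq_adjoint,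
      real_inner_self_eq_norm_sq] at apply_eq
    exact apply_eq.symm
  refine ⟨(Submodule.mem_iInf _).2 fun j => LinearMap.mem_ker.2 ?_, fun β hβ => ?_⟩
  · have sum_zero : ∑ j, ‖star (e j) (u 0)‖ ^ 2 = 0 := by simpa using energy 0
    exact norm_eq_zero.1 (pow_eq_zero_iff two_ne_zero |>.1
      ((Finset.sum_eq_zero_iff_of_nonneg fun _ _ => by positivity).1 sum_zero j
        (Finset.mem_univ j)))
  · have card_ne : (β.card : ℝ) ≠ 0 := by simpa using hβ
    have product_zero : β.card * ‖u β‖ ^ 2 = 0 :=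
      le_antisymm (by linarith [energy β, inner_nonneg β]) (by positivity)
    exact norm_eq_zero.1 (pow_eq_zero_iff two_ne_zero |>.1
      ((mul_eq_zero.1 product_zero).resolve_left card_ne))

lemma oscillator_single_eq_zero {w : E} (hw : w ∈ vacuum e) :
    oscillator e (lp.single 2 (0 : Multiset ι) w) = 0 := by
  have star_apply (j : ι) : star (e j) w = 0 := LinearMap.mem_ker.1 ((Submodule.mem_iInf _).1 hw j)
  ext β
  rw [oscillator, star_supercharge, supercharge]
  simp only [_root_.add_apply, _root_.sum_apply, lp.coeFn_add, lp.coeFn_sum, Pi.add_apply,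
    Finset.sum_apply, mul_apply_eq_comp, fiberwiseHom_apply, WeightedShift.op_apply, map_smul,
    annihilation, creation]
  have apply_erase (j : ι) : star (e j) (lp.single (E := fun _ => E) 2 0 w (β.erase j)) = 0 := by
    rcases eq_or_ne (β.erase j) 0 with h | h
    · rw [h, lp.single_apply_self, star_apply]
    · rw [lp.single_apply_ne _ _ _ h, map_zero]
  have apply_cons (j : ι) : lp.single (E := fun _ => E) 2 0 w (j ::ₘ β) = 0 :=
    lp.single_apply_ne _ _ _ (Multiset.cons_ne_zero)
  simp only [apply_erase, apply_cons, map_zero, smul_zero, Finset.sum_const_zero, add_zero,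
    lp.coeFn_zero, Pi.zero_apply]

omit [Fintype ι] [CompleteSpace E] in
lemma single_zero_mem_range_evenProj (w : E) :
    lp.single 2 (0 : Multiset ι) w ∈ range (evenProj ι E).toLinearMap := by
  refine ⟨lp.single 2 0 w, lp.ext ?_⟩
  refine (projOn_apply _ _).trans (Set.indicator_eq_self.2 fun β hβ => ?_)
  have : β = 0 := by_contra fun h => hβ (lp.single_apply_ne _ _ _ h)
  simp [this]

omit [Fintype ι] [DecidableEq ι] [CompleteSpace E] in
lemma apply_zero_of_mem_range_one_sub_evenProj {u : SquareSummable (Multiset ι) E}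
    (hu : u ∈ range (1 - evenProj ι E).toLinearMap) : u 0 = 0 := by
  obtain ⟨v, rfl⟩ := hu
  rw [evenProj, one_sub_projOn]
  exact (congrFun (projOn_apply _ v) 0).trans (Set.indicator_of_notMem (by simp) _)

lemma injective_corner_oscillator (he : IsCAR e (star e)) :
    Function.Injective (corner (1 - evenProj ι E) (evenProj ι E) (oscillator e)) := by
  refine LinearMap.ker_eq_bot.1 (LinearMap.ker_eq_bot'.2 fun u hu => Subtype.ext (lp.ext ?_))
  have apply_eq_zero : oscillator e u = 0 :=
    (coe_corner_apply (isIdempotentElem_evenProj E).one_sub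
      (semiconjBy_one_sub_swap (odd_oscillator e)) u).symm.trans (congrArg Subtype.val hu)
  ext β
  rcases eq_or_ne β 0 with rfl | h
  · exact apply_zero_of_mem_range_one_sub_evenProj u.2
  · exact (apply_of_oscillator_apply_eq_zero he apply_eq_zero).2 β h

lemma finrank_ker_corner_oscillator (he : IsCAR e (star e)) :
    finrank ℝ (ker (corner (evenProj ι E) (1 - evenProj ι E) (oscillator e))) =
      finrank ℝ (vacuum e) := by
  have coe_corner := coe_corner_apply (isIdempotentElem_evenProj E) (odd_oscillator e)
  have spec (u : ker (corner (evenProj ι E) (1 - evenProj ι E) (oscillator e))) :=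
    apply_of_oscillator_apply_eq_zero he
      ((coe_corner u).symm.trans (congrArg Subtype.val (LinearMap.mem_ker.1 u.2)))
  refine (LinearEquiv.ofBijective (LinearMap.codRestrict (vacuum e)
    ((lp.evalCLM ℝ (fun _ : Multiset ι => E) 2 0).toLinearMap ∘ₗ Submodule.subtype _ ∘ₗ
      Submodule.subtype _) fun u => (spec u).1) ⟨?_, fun w => ?_⟩).finrank_eq
  · refine LinearMap.ker_eq_bot.1 (LinearMap.ker_eq_bot'.2 fun u hu => ?_)
    refine Subtype.ext (Subtype.ext (lp.ext (funext fun β => ?_)))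
    rcases eq_or_ne β 0 with rfl | h
    · exact congrArg Subtype.val hu
    · exact (spec u).2 β h
  · refine ⟨⟨⟨_, single_zero_mem_range_evenProj w.1⟩, LinearMap.mem_ker.2 (Subtype.ext ?_)⟩,
      Subtype.ext (lp.single_apply_self (E := fun _ : Multiset ι => E) 2 0 w.1)⟩
    exact (coe_corner _).trans (oscillator_single_eq_zero w.2)

variable [FiniteDimensional ℝ E]

local notation "π" => calkin ℝ (SquareSummable (Multiset ι) E)

lemma calkin_oscillator_mul_self (he : IsCAR e (star e)) :
    π (oscillator e) * π (oscillator e) = 1 := by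
  have star_sq : star (supercharge e) * star (supercharge e) = 0 := by
    rw [← star_mul, supercharge_mul_self he, star_zero]
  have expand : oscillator e * oscillator e =
      supercharge e * star (supercharge e) + star (supercharge e) * supercharge e := by
    rw [oscillator, add_mul, mul_add, mul_add, supercharge_mul_self he, star_sq, zero_add, add_zero]
  have term (j k : ι) : π (fiberwiseHom (Multiset ι) E (e j * star (e k)) *
        ((annihilation j).op E * (creation k).op E)) +
      π (fiberwiseHom (Multiset ι) E (star (e k) * e j) *
        ((creation k).op E * (annihilation j).op E)) =
      if j = k then π ((creation j).op E) * π ((annihilation j).op E) else 0 := by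
    rw [map_mul, map_mul π ((annihilation j).op E),
      (calkin_commute_annihilation_creation E j k).eq, ← map_mul π ((creation k).op E), ← map_mul,
      ← map_add, ← add_mul, ← map_add, he.mul_star_add_star_mul]
    split_ifs with h
    · rw [map_one, one_mul, map_mul, h]
    · rw [map_zero, zero_mul, map_zero]
  rw [← map_mul, expand, supercharge_mul_star, star_mul_supercharge]
  simp only [map_add, map_sum, ← Finset.sum_add_distrib, term, Finset.sum_ite_eq, Finset.mem_univ,
    if_true]
  exact calkin_sum_creation_mul_annihilation E

theorem index_oscillator (he : IsCAR e (star e)) :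
    evenIndex (evenProj ι E) (oscillator e) = finrank ℝ (vacuum e) ∧
      oddIndex (evenProj ι E) (oscillator e) = -finrank ℝ (vacuum e) := by
  obtain ⟨even_eq, odd_eq⟩ := evenIndex_eq_finrank_ker (isIdempotentElem_evenProj E)
    (odd_oscillator e) (isSelfAdjoint_oscillator e) (calkin_oscillator_mul_self he)
    (injective_corner_oscillator he)
  rw [finrank_ker_corner_oscillator he] at even_eq
  exact ⟨even_eq, even_eq ▸ odd_eq⟩

end Oscillator

/-! ### Representations -/

/-- `I` and `J` satisfy the relations of the quaternion units `i` and `j`. -/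
structure IsQuaternionicPair {A : Type*} [Ring A] (I J : A) : Prop where
  sq_left : I * I = -1
  sq_right : J * J = -1
  anticomm : I * J = -(J * I)

lemma IsQuaternionicPair.map {A B : Type*} [Ring A] [Ring B] {I J : A}
    (h : IsQuaternionicPair I J) (φ : A →+* B) : IsQuaternionicPair (φ I) (φ J) := by
  constructor <;> simp only [← map_mul, h.sq_left, h.sq_right, h.anticomm, map_neg, map_one]

section Quaternionic

variable {V : Type*} [AddCommGroup V] [Module ℝ V] {I J : Module.End ℝ V}

lemma IsQuaternionicPair.four_dvd_finrank (h : IsQuaternionicPair I J) : 4 ∣ finrank ℝ V := by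
  let units : QuaternionAlgebra.Basis (Module.End ℝ V) (-1 : ℝ) 0 (-1) :=
    { i := I, j := J, k := I * J
      i_mul_i := by simp [h.sq_left]
      j_mul_j := by simp [h.sq_right]
      i_mul_j := rfl
      j_mul_i := by simp [h.anticomm] }
  let φ : Quaternion ℝ →ₐ[ℝ] Module.End ℝ V := QuaternionAlgebra.lift units
  let _ : Module (Quaternion ℝ) V := Module.compHom V φ.toRingHom
  have : IsScalarTower ℝ (Quaternion ℝ) V :=
    ⟨fun r q v => by change φ (r • q) v = r • φ q v; simp⟩
  rw [← Module.finrank_mul_finrank ℝ (Quaternion ℝ) V, Quaternion.finrank_eq_four]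
  exact dvd_mul_right _ _

lemma IsQuaternionicPair.four_dvd_finrank_submodule (h : IsQuaternionicPair I J)
    {U : Submodule ℝ V} (hI : ∀ v ∈ U, I v ∈ U) (hJ : ∀ v ∈ U, J v ∈ U) : 4 ∣ finrank ℝ U := by
  have pair : IsQuaternionicPair (I.restrict hI) (J.restrict hJ) :=
    ⟨LinearMap.ext fun v => Subtype.ext (LinearMap.congr_fun h.sq_left v),
      LinearMap.ext fun v => Subtype.ext (LinearMap.congr_fun h.sq_right v),
      LinearMap.ext fun v => Subtype.ext (LinearMap.congr_fun h.anticomm v)⟩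
  exact pair.four_dvd_finrank

end Quaternionic

section Fermions

variable {ι : Type*} [DecidableEq ι]

lemma IsCAR.map {R S : Type*} [Ring R] [Ring S] {a b : ι → R} (h : IsCAR a b) (φ : R →+* S) :
    IsCAR (fun j => φ (a j)) fun j => φ (b j) where
  mul_self_left j := by rw [← map_mul, h.mul_self_left, map_zero]
  mul_self_right j := by rw [← map_mul, h.mul_self_right, map_zero]
  anticomm_left j k hjk := by rw [← map_mul, ← map_mul, h.anticomm_left hjk, map_neg]
  anticomm_right j k hjk := by rw [← map_mul, ← map_mul, h.anticomm_right hjk, map_neg]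
  mul_add_mul j k := by
    rw [← map_mul, ← map_mul, ← map_add, h.mul_add_mul, apply_ite φ, map_one, map_zero]

variable {K V : Type*} [Field K] [AddCommGroup V] [Module K V] [FiniteDimensional K V]

/-- The kernel of `b` is also its image: if `b v = 0` then `v = b (a v)`. -/
lemma finrank_eq_two_mul_finrank_inf_ker {a b : Module.End K V} (hb : b * b = 0)
    (hab : a * b + b * a = 1) {U : Submodule K V} (ha_mem : ∀ v ∈ U, a v ∈ U)
    (hb_mem : ∀ v ∈ U, b v ∈ U) : finrank K U = 2 * finrank K ↥(U ⊓ ker b) := by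
  have map_eq : U.map b = U ⊓ ker b := by
    refine le_antisymm ?_ fun v ⟨hv, hbv⟩ => ⟨a v, ha_mem v hv, ?_⟩
    · rintro _ ⟨v, hv, rfl⟩
      exact ⟨hb_mem v hv, LinearMap.congr_fun hb v⟩
    · have apply_eq : a (b v) + b (a v) = v := LinearMap.congr_fun hab v
      rwa [LinearMap.mem_ker.1 hbv, map_zero, zero_add] at apply_eq
  have rank_nullity := (b.domRestrict U).finrank_range_add_finrank_ker
  rw [LinearMap.range_domRestrict, map_eq, LinearMap.ker_domRestrict,
    ← Submodule.finrank_map_subtype_eq U, Submodule.map_comap_subtype] at rank_nullity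
  rw [← rank_nullity, two_mul]

lemma IsCAR.finrank_eq_two_pow_mul {a b : ι → Module.End K V} (h : IsCAR a b) (s : Finset ι) :
    finrank K V = 2 ^ s.card * finrank K ↥(⨅ j ∈ s, ker (b j)) := by
  induction s using Finset.induction_on with
  | empty =>
    have iInf_eq : ⨅ j ∈ (∅ : Finset ι), ker (b j) = ⊤ := by simp
    rw [iInf_eq, finrank_top, Finset.card_empty, pow_zero, one_mul]
  | insert i s hi ih =>
    have mem_of_anticomm {c : Module.End K V} (hc : ∀ j ∈ s, b j * c = -(c * b j)) (v : V)
        (hv : v ∈ ⨅ j ∈ s, ker (b j)) : c v ∈ ⨅ j ∈ s, ker (b j) := by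
      simp only [Submodule.mem_iInf, LinearMap.mem_ker] at hv ⊢
      intro j hj
      have apply_eq : b j (c v) = -c (b j v) := LinearMap.congr_fun (hc j hj) v
      rw [apply_eq, hv j hj, map_zero, neg_zero]
    have ne_of_mem {j : ι} (hj : j ∈ s) : i ≠ j := ne_of_mem_of_not_mem hj hi |>.symm
    rw [ih, finrank_eq_two_mul_finrank_inf_ker (h.mul_self_right i)
      ((h.mul_add_mul i i).trans (if_pos rfl))
      (mem_of_anticomm fun j hj => eq_neg_of_add_eq_zero_right
        ((h.mul_add_mul i j).trans (if_neg (ne_of_mem hj))))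
      (mem_of_anticomm fun j hj => h.anticomm_right (ne_of_mem hj).symm),
      Finset.card_insert_of_notMem hi, pow_succ, mul_assoc, Finset.iInf_insert, inf_comm]

theorem IsCAR.dvdRepDim.{u} {S : Type*} [Ring S] [Fintype ι] {a b : ι → S} {I J : S}
    (hab : IsCAR a b) (hIJ : IsQuaternionicPair I J) (hI : ∀ j, Commute I (b j))
    (hJ : ∀ j, Commute J (b j)) : DvdRepDim.{u} ℝ S (4 * 2 ^ Fintype.card ι) := by
  intro M _ _ _ ρ
  have mem_of_commute {c : S} (hc : ∀ j, Commute c (b j)) (v : M)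
      (hv : v ∈ ⨅ j ∈ Finset.univ, ker (ρ (b j))) :
      ρ c v ∈ ⨅ j ∈ Finset.univ, ker (ρ (b j)) := by
    simp only [Submodule.mem_iInf, LinearMap.mem_ker] at hv ⊢
    intro j hj
    have apply_eq : ρ (b j) (ρ c v) = ρ c (ρ (b j) v) :=
      LinearMap.congr_fun ((hc j).map ρ).eq.symm v
    rw [apply_eq, hv j hj, map_zero]
  rw [(hab.map ρ).finrank_eq_two_pow_mul Finset.univ, mul_comm]
  exact mul_dvd_mul_left _ ((hIJ.map ρ).four_dvd_finrank_submodule (mem_of_commute hI)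
    (mem_of_commute hJ))

end Fermions

/-! ### The index of the Dirac operator -/

section Parity

variable {𝕜 V : Type*} [NontriviallyNormedField 𝕜] [NormedAddCommGroup V] [NormedSpace 𝕜 V]
  {p T : V →L[𝕜] V}

/-- A ring acting on `V` by operators that commute with `p` acts on the range of `p`. -/
def cornerHom {S : Type*} [Ring S] (hp : IsIdempotentElem p) (φ : S →+* (V →L[𝕜] V))
    (hφ : ∀ s, Commute (φ s) p) : S →+* Module.End 𝕜 (range (p : V →ₗ[𝕜] V)) where
  toFun s := corner p p (φ s)
  map_one' := by rw [map_one, corner_one hp]; rfl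
  map_mul' s t := by rw [map_mul, ← corner_comp_corner hp (hφ t)]; rfl
  map_zero' := by rw [map_zero]; ext; simp [corner]
  map_add' s t := by rw [map_add]; ext; simp [corner]

theorem DvdRepDim.dvd_evenIndex.{u} {V : Type u} [NormedAddCommGroup V] [NormedSpace 𝕜 V]
    [CompleteSpace V] {p T : V →L[𝕜] V} {S : Type*} [Ring S] {d : ℕ}
    (hd : DvdRepDim.{u} 𝕜 S d) (hp : IsIdempotentElem p)
    (hT : SemiconjBy T p (1 - p)) (hT_unit : IsUnit (calkin 𝕜 V T)) (φ : S →+* (V →L[𝕜] V))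
    (hφp : ∀ s, Commute (φ s) p) (hφT : ∀ s, Commute (φ s) T) : (d : ℤ) ∣ evenIndex p T := by
  have hφq (s : S) : Commute (φ s) (1 - p) := (Commute.one_right _).sub_right (hφp s)
  refine hd.dvd_index (isFredholm_corner hp hp.one_sub hT hT_unit) (cornerHom hp φ hφp)
    (cornerHom hp.one_sub φ hφq) fun s => ?_
  exact (corner_comp_corner hp (hφp s) T).trans
    ((congrArg _ (hφT s).eq.symm).trans (corner_comp_corner hp hT (φ s)).symm)

lemma oddIndex_eq_of_semiconjBy [CompleteSpace V] {T' : V →L[𝕜] V} (hp : IsIdempotentElem p)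
    (hT : SemiconjBy T p (1 - p)) (hT' : SemiconjBy T' p (1 - p)) (hT_unit : IsUnit (calkin 𝕜 V T))
    (hT'_unit : IsUnit (calkin 𝕜 V T')) {g : (V →L[𝕜] V)ˣ} (hg : Commute g.1 p)
    (h : SemiconjBy g.1 T T') : oddIndex p T = oddIndex p T' := by
  have hg' : Commute g.1 (1 - p) := (Commute.one_right _).sub_right hg
  have g_unit : IsUnit (calkin 𝕜 V g.1) := g.isUnit.map _
  have left := index_corner_mul hp.one_sub hp hp hg g_unit (semiconjBy_one_sub_swap hT) hT_unit
  have right := index_corner_mul hp.one_sub hp.one_sub hp (semiconjBy_one_sub_swap hT') hT'_unit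
    hg' g_unit
  rw [index_corner_units hp g hg, zero_add] at left
  rw [index_corner_units hp.one_sub g hg', add_zero] at right
  rw [oddIndex, oddIndex, ← left, ← right, h.eq]

end Parity

section Dirac

variable {ι : Type*} [Fintype ι] [DecidableEq ι] {E : Type*} [NormedAddCommGroup E]
  [InnerProductSpace ℝ E] {γ A : ι → E →L[ℝ] E}

lemma semiconjBy_fiberwiseHom_dirac_neg {Γ : E →L[ℝ] E} (hγ : ∀ j, Γ * γ j = -(γ j * Γ))
    (hA : ∀ j, Commute Γ (A j)) :
    SemiconjBy (fiberwiseHom (Multiset ι) E Γ) (dirac γ A) (dirac (fun j => -γ j) A) := by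
  rw [SemiconjBy, dirac, dirac, potential, kinetic, kinetic, mul_add, add_mul, Finset.mul_sum,
    Finset.mul_sum, Finset.sum_mul, Finset.sum_mul]
  congr 1 <;> refine Finset.sum_congr rfl fun j _ => ?_
  · exact ((hA j).map (fiberwiseHom _ E)).mul_right (commute_fiberwiseHom_position E Γ j)
  · rw [← mul_assoc, ← map_mul, hγ, ← neg_mul, map_mul, mul_assoc, mul_assoc,
      (commute_fiberwiseHom_momentum E Γ j).eq]

lemma commute_fiberwiseHom_dirac {M : E →L[ℝ] E} (hγ : ∀ j, Commute M (γ j))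
    (hA : ∀ j, Commute M (A j)) : Commute (fiberwiseHom (Multiset ι) E M) (dirac γ A) :=
  (Commute.sum_right _ _ _ fun j _ => ((hA j).map (fiberwiseHom _ E)).mul_right
    (commute_fiberwiseHom_position E M j)).add_right
  (Commute.sum_right _ _ _ fun j _ => ((hγ j).map (fiberwiseHom _ E)).mul_right
    (commute_fiberwiseHom_momentum E M j))

local notation "π" => calkin ℝ (SquareSummable (Multiset ι) E)

variable [FiniteDimensional ℝ E] [CompleteSpace E]

lemma calkin_commute_dirac_oscillator {e : ι → E →L[ℝ] E} (hγ : ∀ j k, Commute (γ j) (e k))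
    (hγ_star : ∀ j k, Commute (γ j) (star (e k))) (hA : ∀ j k, Commute (A j) (e k))
    (hA_star : ∀ j k, Commute (A j) (star (e k))) :
    Commute (π (dirac γ A)) (π (oscillator e)) := by
  have ladder (W : WeightedShift (Multiset ι)) := fun M => commute_fiberwiseHom_op (E := E) M W
  have position_left := commute_fiberwiseHom_position (ι := ι) E
  have momentum_left := commute_fiberwiseHom_momentum (ι := ι) E
  rw [dirac, oscillator, star_supercharge, map_add, map_add]
  refine .add_left (.add_right ?_ ?_) (.add_right ?_ ?_)
  · exact calkin_commute_sum_fiberwiseHom_mul hA position_left (fun M j => ladder _ M)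
      (calkin_commute_position_annihilation E)
  · exact calkin_commute_sum_fiberwiseHom_mul hA_star position_left (fun M j => ladder _ M)
      (calkin_commute_position_creation E)
  · exact calkin_commute_sum_fiberwiseHom_mul hγ momentum_left (fun M j => ladder _ M)
      (calkin_commute_momentum_annihilation E)
  · exact calkin_commute_sum_fiberwiseHom_mul hγ_star momentum_left (fun M j => ladder _ M)
      (calkin_commute_momentum_creation E)

/-- The chirality `Γ` conjugates the Dirac operator `D` to its parametrix, so that the odd index
of `D` is the negative of its even index; the same holds for the oscillator `C`, and the two are
compared by `odd C + even D = odd D + even C`. -/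
theorem IsElliptic.evenIndex_dirac (h : IsElliptic γ A) {Γ : (E →L[ℝ] E)ˣ}
    (hΓγ : ∀ j, Γ.1 * γ j = -(γ j * Γ.1)) (hΓA : ∀ j, Commute Γ.1 (A j)) {e : ι → E →L[ℝ] E}
    (he : IsCAR e (star e)) (hγ : ∀ j k, Commute (γ j) (e k))
    (hγ_star : ∀ j k, Commute (γ j) (star (e k))) (hA : ∀ j k, Commute (A j) (e k))
    (hA_star : ∀ j k, Commute (A j) (star (e k))) :
    evenIndex (evenProj ι E) (dirac γ A) = finrank ℝ (vacuum e) := by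
  have oscillator_unit : IsUnit (π (oscillator e)) :=
    ⟨⟨_, _, calkin_oscillator_mul_self he, calkin_oscillator_mul_self he⟩, rfl⟩
  have chirality := oddIndex_eq_of_semiconjBy (isIdempotentElem_evenProj E) (odd_dirac γ A)
    (odd_dirac _ A) h.isUnit_calkin_dirac h.neg.isUnit_calkin_dirac
    (g := Units.map (fiberwiseHom (Multiset ι) E).toMonoidHom Γ) (even_fiberwiseHom E Γ.1)
    (semiconjBy_fiberwiseHom_dirac_neg hΓγ hΓA)
  have exchange := oddIndex_add_evenIndex_comm (isIdempotentElem_evenProj E) (odd_dirac γ A)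
    (odd_oscillator e) h.isUnit_calkin_dirac oscillator_unit
    (calkin_commute_dirac_oscillator hγ hγ_star hA hA_star)
  have parametrix := h.oddIndex_dirac_neg_add_evenIndex_dirac
  obtain ⟨even_eq, odd_eq⟩ := index_oscillator he
  lia

theorem IsElliptic.dvd_finrank (h : IsElliptic γ A) {Γ : (E →L[ℝ] E)ˣ}
    (hΓγ : ∀ j, Γ.1 * γ j = -(γ j * Γ.1)) (hΓA : ∀ j, Commute Γ.1 (A j)) {S : Type*} [Ring S]
    {a b : ι → S} {I J : S} (hab : IsCAR a b) (hIJ : IsQuaternionicPair I J)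
    (hI : ∀ j, Commute I (b j)) (hJ : ∀ j, Commute J (b j)) (φ : S →+* (E →L[ℝ] E))
    (hφ_star : ∀ j, star (φ (a j)) = φ (b j)) (hφγ : ∀ s j, Commute (φ s) (γ j))
    (hφA : ∀ s j, Commute (φ s) (A j)) :
    4 * 4 ^ Fintype.card ι ∣ finrank ℝ E := by
  let e (j : ι) := φ (a j)
  have star_eq : star e = fun j => φ (b j) := funext hφ_star
  have star_eq_apply (j : ι) : star (e j) = φ (b j) := hφ_star j
  have he : IsCAR e (star e) := star_eq ▸ hab.map φ
  have index_eq := h.evenIndex_dirac hΓγ hΓA he (fun j k => (hφγ (a k) j).symm)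
    (fun j k => star_eq_apply k ▸ (hφγ _ j).symm) (fun j k => (hφA (a k) j).symm)
    (fun j k => star_eq_apply k ▸ (hφA _ j).symm)
  have dvd_index := (hab.dvdRepDim hIJ hI hJ).dvd_evenIndex (isIdempotentElem_evenProj E)
    (odd_dirac γ A) h.isUnit_calkin_dirac ((fiberwiseHom (Multiset ι) E).comp φ)
    (fun s => even_fiberwiseHom E (φ s))
    fun s => commute_fiberwiseHom_dirac (hφγ s) (hφA s)
  rw [index_eq, Int.natCast_dvd_natCast] at dvd_index
  have finrank_eq := IsCAR.finrank_eq_two_pow_mul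
    (he.map (ContinuousLinearMap.toLinearMapRingHom : (E →L[ℝ] E) →+* _)) Finset.univ
  have vacuum_eq : ⨅ j ∈ Finset.univ, ker (star (e j)).toLinearMap = vacuum e := by
    simp only [vacuum, Finset.mem_univ, iInf_pos]
  have pow_eq : 4 * 4 ^ Fintype.card ι = 2 ^ Fintype.card ι * (4 * 2 ^ Fintype.card ι) := by
    rw [show 4 = 2 * 2 from rfl, mul_pow]
    ring
  rw [finrank_eq, pow_eq, Finset.card_univ]
  exact mul_dvd_mul_left _ (vacuum_eq ▸ dvd_index)

end Dirac

/-! ### Quaternionic matrices -/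

section Compactness

open Metric

variable {ι : Type*} [Fintype ι] {E : Type*} [NormedAddCommGroup E] [InnerProductSpace ℝ E]
  [FiniteDimensional ℝ E]

lemma exists_pos_mul_norm_mul_norm_le {F G : Type*} [NormedAddCommGroup F] [NormedSpace ℝ F]
    [FiniteDimensional ℝ F] [NormedAddCommGroup G] [NormedSpace ℝ G] (B : F →L[ℝ] E →L[ℝ] G)
    (hB : ∀ x v, B x v = 0 → x = 0 ∨ v = 0) : ∃ c > 0, ∀ x v, c * (‖x‖ * ‖v‖) ≤ ‖B x v‖ := by
  have := FiniteDimensional.proper ℝ F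
  have := FiniteDimensional.proper ℝ E
  obtain ⟨c, c_pos, hc⟩ := ((isCompact_sphere (0 : F) 1).prod
    (isCompact_sphere (0 : E) 1)).exists_forall_le' (f := fun p => ‖B p.1 p.2‖) (a := 0)
    (by fun_prop) fun p ⟨hx, hv⟩ => norm_pos_iff.2 fun h =>
      (hB _ _ h).elim (ne_zero_of_mem_unit_sphere ⟨p.1, hx⟩) (ne_zero_of_mem_unit_sphere ⟨p.2, hv⟩)
  refine ⟨c, c_pos, fun x v => ?_⟩
  rcases eq_or_ne x 0 with rfl | hx
  · simp
  rcases eq_or_ne v 0 with rfl | hv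
  · simp
  have unit_le := hc (‖x‖⁻¹ • x, ‖v‖⁻¹ • v)
    ⟨mem_sphere_zero_iff_norm.2 (norm_smul_inv_norm hx),
      mem_sphere_zero_iff_norm.2 (norm_smul_inv_norm hv)⟩
  simp only [map_smul, _root_.smul_apply, norm_smul, norm_inv, norm_norm] at unit_le
  have hx_pos := norm_pos_iff.2 hx
  have hv_pos := norm_pos_iff.2 hv
  field_simp at unit_le
  linarith

lemma exists_boundedBelow {A : ι → E →L[ℝ] E}
    (hA : ∀ l : ι → ℝ, l ≠ 0 → IsUnit (∑ j, l j • A j)) :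
    ∃ δ > 0, BoundedBelow δ (fun j => A j) := by
  let B : EuclideanSpace ℝ ι →L[ℝ] E →L[ℝ] E :=
    ∑ j, (EuclideanSpace.proj j).smulRight (A j)
  have B_apply (l : EuclideanSpace ℝ ι) : B l = ∑ j, l j • A j := by
    simp [B, _root_.sum_apply]
  obtain ⟨c, c_pos, hc⟩ := exists_pos_mul_norm_mul_norm_le B fun l v h => by
    refine or_iff_not_imp_left.2 fun hl => ?_
    obtain ⟨g, hg⟩ := hA l (mt (WithLp.ofLp_eq_zero 2).1 hl)
    rw [B_apply, ← hg] at h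
    simpa [← mul_apply_eq_comp] using congrArg g⁻¹.1 h
  refine ⟨c ^ 2, by positivity, fun l v => ?_⟩
  have le_norm := hc (WithLp.toLp 2 l) v
  rw [B_apply, _root_.sum_apply] at le_norm
  calc c ^ 2 * (∑ j, l j ^ 2) * ‖v‖ ^ 2 = (c * (‖WithLp.toLp 2 l‖ * ‖v‖)) ^ 2 := by
        rw [mul_pow, mul_pow, EuclideanSpace.real_norm_sq_eq, mul_assoc]
    _ ≤ ‖∑ j, l j • A j v‖ ^ 2 := by gcongr; exact le_norm

end Compactness

section Action

variable {κ μ : Type*} [Fintype κ] [Fintype μ]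

instance : StarModule ℝ ℍ[ℝ] := ⟨Quaternion.star_smul⟩

lemma re_sum {ι : Type*} (s : Finset ι) (q : ι → ℍ[ℝ]) : (∑ i ∈ s, q i).re = ∑ i ∈ s, (q i).re :=
  map_sum (QuaternionAlgebra.reₗ (-1 : ℝ) 0 (-1)) q s

lemma re_trace_mul_comm (X : Matrix κ μ ℍ[ℝ]) (Y : Matrix μ κ ℍ[ℝ]) :
    (trace (X * Y)).re = (trace (Y * X)).re := by
  have re_mul_comm (p q : ℍ[ℝ]) : (p * q).re = (q * p).re := by
    simp only [Quaternion.re_mul]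
    ring
  simp only [trace, diag_apply, mul_apply, re_sum]
  rw [Finset.sum_comm]
  exact Finset.sum_congr rfl fun _ _ => Finset.sum_congr rfl fun _ _ => re_mul_comm _ _

variable (κ μ) in
/-- Quaternionic `κ × μ` matrices with the inner product `re (trace (v * wᴴ))`. -/
abbrev MatrixSpace : Type _ := PiLp 2 fun _ : κ × μ => ℍ[ℝ]

/-- The matrix of entries. -/
noncomputable def toMatrix : MatrixSpace κ μ ≃ₗ[ℝ] Matrix κ μ ℍ[ℝ] :=
  WithLp.linearEquiv 2 ℝ _ ≪≫ₗ LinearEquiv.curry ℝ ℍ[ℝ] κ μ ≪≫ₗ Matrix.ofLinearEquiv ℝ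

lemma inner_eq_re_trace (v w : MatrixSpace κ μ) :
    inner ℝ v w = (trace (toMatrix v * (toMatrix w)ᴴ)).re := by
  simp only [PiLp.inner_apply, Fintype.sum_prod_type, trace, diag_apply, mul_apply,
    re_sum, Quaternion.inner_def]
  rfl

variable [DecidableEq κ] [DecidableEq μ]

/-- The action of quaternionic matrices by left multiplication. -/
noncomputable def mulLeft :
    Matrix κ κ ℍ[ℝ] →⋆ₐ[ℝ] (MatrixSpace κ μ →L[ℝ] MatrixSpace κ μ) where
  toFun X := LinearMap.toContinuousLinearMap (toMatrix.symm.conj (mulLeftLinearMap μ ℝ X))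
  map_one' := by ext1 v; simp [LinearEquiv.conj_apply]
  map_mul' X Y := by ext1 v; simp [LinearEquiv.conj_apply]
  map_zero' := by ext1 v; simp [LinearEquiv.conj_apply]
  map_add' X Y := by ext1 v; simp [LinearEquiv.conj_apply, Matrix.add_mul]
  commutes' r := by ext1 v; simp [LinearEquiv.conj_apply, Algebra.algebraMap_eq_smul_one]
  map_star' X := by
    refine (ContinuousLinearMap.eq_adjoint_iff _ _).2 fun v w => ?_
    rw [inner_eq_re_trace, inner_eq_re_trace, re_trace_mul_comm, re_trace_mul_comm (toMatrix v)]
    simp [LinearEquiv.conj_apply, star_eq_conjTranspose, Matrix.mul_assoc]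

/-- The action `v ↦ v * Gᴴ` of quaternionic matrices by right multiplication. -/
noncomputable def mulRight :
    Matrix μ μ ℍ[ℝ] →⋆ₐ[ℝ] (MatrixSpace κ μ →L[ℝ] MatrixSpace κ μ) where
  toFun G := LinearMap.toContinuousLinearMap (toMatrix.symm.conj (mulRightLinearMap κ ℝ Gᴴ))
  map_one' := by ext1 v; simp [LinearEquiv.conj_apply]
  map_mul' X Y := by ext1 v; simp [LinearEquiv.conj_apply, Matrix.mul_assoc]
  map_zero' := by ext1 v; simp [LinearEquiv.conj_apply]
  map_add' X Y := by ext1 v; simp [LinearEquiv.conj_apply, Matrix.mul_add]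
  commutes' r := by
    ext1 v
    simp [LinearEquiv.conj_apply, Algebra.algebraMap_eq_smul_one, conjTranspose_smul]
  map_star' X := by
    refine (ContinuousLinearMap.eq_adjoint_iff _ _).2 fun v w => ?_
    simp [LinearEquiv.conj_apply, inner_eq_re_trace, star_eq_conjTranspose, Matrix.mul_assoc]

lemma commute_mulRight_mulLeft (G : Matrix μ μ ℍ[ℝ]) (X : Matrix κ κ ℍ[ℝ]) :
    Commute (mulRight (κ := κ) G) (mulLeft X) := by
  ext1 v
  simp [mulLeft, mulRight, LinearEquiv.conj_apply, Matrix.mul_assoc]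

end Action

section Tensor

variable {κ : Type*} [Fintype κ] [DecidableEq κ] {R : Type*} [Ring R] [Algebra ℝ R]

lemma commute_scalar_mapMatrix (r : R) (G : Matrix κ κ ℝ) :
    Commute (scalar κ r) ((algebraMap ℝ R).mapMatrix G) := by
  rw [scalar_commute_iff]
  ext i j
  exact (Algebra.commutes (G i j) r).symm

lemma star_mapMatrix_algebraMap [StarRing R] [StarModule ℝ R] (G : Matrix κ κ ℝ) :
    star ((algebraMap ℝ R).mapMatrix G) = (algebraMap ℝ R).mapMatrix (star G) := by
  ext i j
  exact (algebraMap_star_comm (G j i)).symm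

end Tensor

section JordanWigner

lemma IsCAR.fromBlocks {R μ : Type*} [Ring R] [Fintype μ] [DecidableEq μ] {n : ℕ}
    {a b : Fin n → Matrix μ μ R} (h : IsCAR a b) :
    IsCAR (Fin.cons (Matrix.fromBlocks 0 1 0 0) fun j => Matrix.fromBlocks (a j) 0 0 (-a j))
      (Fin.cons (Matrix.fromBlocks 0 0 1 0) fun j => Matrix.fromBlocks (b j) 0 0 (-b j) :
        Fin (n + 1) → Matrix (μ ⊕ μ) (μ ⊕ μ) R) where
  mul_self_left := by
    simp [Fin.forall_fin_succ, fromBlocks_multiply, h.mul_self_left]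
  mul_self_right := by
    simp [Fin.forall_fin_succ, fromBlocks_multiply, h.mul_self_right]
  anticomm_left := by
    simp +contextual [Fin.forall_fin_succ, fromBlocks_multiply, fromBlocks_neg, h.anticomm_left _]
  anticomm_right := by
    simp +contextual [Fin.forall_fin_succ, fromBlocks_multiply, fromBlocks_neg, h.anticomm_right _]
  mul_add_mul := by
    have fromBlocks_ite (p : Prop) [Decidable p] :
        Matrix.fromBlocks (if p then 1 else 0) 0 0 (if p then 1 else 0) =
          if p then (1 : Matrix (μ ⊕ μ) (μ ⊕ μ) R) else 0 := by
      split_ifs <;> simp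
    simp [Fin.forall_fin_succ, fromBlocks_multiply, fromBlocks_add, h.mul_add_mul,
      (Fin.succ_ne_zero _).symm, fromBlocks_ite]

/-- The Jordan–Wigner transformation. -/
theorem exists_isCAR (n : ℕ) : ∃ (μ : Type) (_ : Fintype μ) (_ : DecidableEq μ)
    (e : Fin n → Matrix μ μ ℝ), Fintype.card μ = 2 ^ n ∧ IsCAR e (star e) := by
  induction n with
  | zero => exact ⟨Unit, inferInstance, inferInstance, Fin.elim0, rfl, by constructor <;> simp⟩
  | succ n ih =>
    obtain ⟨μ, _, _, e, card_μ, he⟩ := ih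
    refine ⟨μ ⊕ μ, inferInstance, inferInstance,
      Fin.cons (Matrix.fromBlocks 0 1 0 0) fun j => Matrix.fromBlocks (e j) 0 0 (-e j), ?_, ?_⟩
    · rw [Fintype.card_sum, card_μ, pow_succ, mul_two]
    · convert he.fromBlocks using 1
      ext1 j
      cases j using Fin.cases <;> simp [star_eq_conjTranspose, fromBlocks_transpose]

end JordanWigner

section Divisibility

lemma isQuaternionicPair_imI_imJ :
    IsQuaternionicPair (⟨0, 1, 0, 0⟩ : ℍ[ℝ]) (⟨0, 0, 1, 0⟩ : ℍ[ℝ]) := by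
  constructor <;> ext <;> simp

theorem two_pow_dvd_card {n : ℕ} {κ : Type*} [Fintype κ] [DecidableEq κ]
    {γ A : Fin n → Matrix κ κ ℍ[ℝ]} (hγ : IsClifford γ) (hA_self : ∀ j, IsSelfAdjoint (A j))
    (hγA : ∀ j k, Commute (γ j) (A k))
    (hA_unit : ∀ l : Fin n → ℝ, l ≠ 0 → IsUnit (∑ j, l j • A j)) {Γ : (Matrix κ κ ℍ[ℝ])ˣ}
    (hΓγ : ∀ j, Γ.1 * γ j = -(γ j * Γ.1)) (hΓA : ∀ j, Commute Γ.1 (A j)) :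
    2 ^ n ∣ Fintype.card κ := by
  obtain ⟨μ, _, _, e, card_μ, he⟩ := exists_isCAR n
  let L := mulLeft (κ := κ) (μ := μ)
  let φ : Matrix μ μ ℝ →+* Matrix μ μ ℍ[ℝ] := (algebraMap ℝ ℍ[ℝ]).mapMatrix
  have elliptic : IsElliptic (fun j => L (γ j)) fun j => L (A j) :=
    { isClifford := hγ.map L.toAlgHom.toRingHom
      isSelfAdjoint := fun j => (hA_self j).map L
      commute := fun j k => (hγA j k).map L
      boundedBelow := exists_boundedBelow fun l hl => by
        simpa only [map_sum, map_smul] using (hA_unit l hl).map L }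
  have dvd := elliptic.dvd_finrank (Γ := Units.map L.toAlgHom.toRingHom.toMonoidHom Γ)
    (fun j => by simpa using congrArg L (hΓγ j)) (fun j => (hΓA j).map L) (he.map φ)
    (isQuaternionicPair_imI_imJ.map (scalar μ)) (fun j => commute_scalar_mapMatrix _ _)
    (fun j => commute_scalar_mapMatrix _ _) (mulRight (κ := κ)).toAlgHom.toRingHom
    (fun j => (map_star mulRight _).symm.trans (congrArg _ (star_mapMatrix_algebraMap _)))
    (fun G j => commute_mulRight_mulLeft G (γ j)) fun G j => commute_mulRight_mulLeft G (A j)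
  have finrank_eq : finrank ℝ (MatrixSpace κ μ) = 4 * 2 ^ n * Fintype.card κ := by
    rw [toMatrix.finrank_eq, finrank_matrix, Quaternion.finrank_eq_four, card_μ]
    ring
  rw [finrank_eq, Fintype.card_fin] at dvd
  refine (Nat.mul_dvd_mul_iff_left (by positivity : 0 < 4 * 2 ^ n)).1 ?_
  rwa [mul_assoc, ← mul_pow]

end Divisibility

/-! ### Clifford families of matrices -/

section Ring

variable {ι κ T : Type*} [Ring T]

lemma IsClifford.comp {A : κ → T} (hA : IsClifford A) {f : ι → κ} (hf : Function.Injective f) :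
    IsClifford (A ∘ f) where
  mul_self j := hA.mul_self (f j)
  anticomm _ _ h := hA.anticomm (hf.ne h)

lemma IsClifford.sumElim {A : ι → T} {G : κ → T} (hA : IsClifford A) (hG : IsClifford G)
    (hAG : ∀ i k, A i * G k = -(G k * A i)) : IsClifford (Sum.elim A G) where
  mul_self := Sum.forall.2 ⟨hA.mul_self, hG.mul_self⟩
  anticomm
    | .inl _, .inl _, h => hA.anticomm (mt (congrArg _) h)
    | .inl i, .inr k, _ => hAG i k
    | .inr k, .inl i, _ => (neg_eq_iff_eq_neg.2 (hAG i k)).symm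
    | .inr _, .inr _, h => hG.anticomm (mt (congrArg _) h)

lemma isClifford_mul_right {A : ι → T} {ω : T} (hAω : ∀ i, Commute (A i) ω)
    (h_sq : ∀ i, A i * A i * (ω * ω) = 1) (hA : ∀ ⦃i j⦄, i ≠ j → A i * A j = -(A j * A i)) :
    IsClifford fun i => A i * ω where
  mul_self i := by rw [(hAω i).symm.mul_mul_mul_comm, h_sq]
  anticomm i j h := by
    rw [(hAω j).symm.mul_mul_mul_comm, (hAω i).symm.mul_mul_mul_comm, hA h, neg_mul]

lemma mul_mul_eq_neg_of_commute {u ω g : T} (hug : Commute u g) (hωg : ω * g = -(g * ω)) :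
    u * ω * g = -(g * (u * ω)) := by
  rw [mul_assoc, hωg, mul_neg, hug.left_comm]

/-- `T` contains `n` pairwise anticommuting self-adjoint square roots of `1`. -/
def HasClifford (T : Type*) [Ring T] [StarRing T] (n : ℕ) : Prop :=
  ∃ A : Fin n → T, IsClifford A ∧ ∀ j, IsSelfAdjoint (A j)

/-- `T` contains `n` pairwise anticommuting square roots of `1` together with a chirality: a unit
anticommuting with all of them. -/
def HasChiralClifford (T : Type*) [Ring T] (n : ℕ) : Prop :=
  ∃ (γ : Fin n → T) (Γ : Tˣ), IsClifford γ ∧ ∀ j, Γ.1 * γ j = -(γ j * Γ.1)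

lemma HasClifford.of_card_le [Fintype ι] [StarRing T] {n : ℕ} {A : ι → T} (hA : IsClifford A)
    (hA_self : ∀ j, IsSelfAdjoint (A j)) (hn : n ≤ Fintype.card ι) : HasClifford T n := by
  obtain ⟨f⟩ : Nonempty (Fin n ↪ ι) := Function.Embedding.nonempty_of_card_le (by simpa using hn)
  exact ⟨_, hA.comp f.injective, fun j => hA_self (f j)⟩

lemma HasChiralClifford.of_card_le [Fintype ι] {n : ℕ} {γ : ι → T} (hγ : IsClifford γ) (Γ : Tˣ)
    (hΓ : ∀ j, Γ.1 * γ j = -(γ j * Γ.1)) (hn : n ≤ Fintype.card ι) : HasChiralClifford T n := by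
  obtain ⟨f⟩ : Nonempty (Fin n ↪ ι) := Function.Embedding.nonempty_of_card_le (by simpa using hn)
  exact ⟨_, Γ, hγ.comp f.injective, fun j => hΓ (f j)⟩

lemma HasClifford.mono [StarRing T] {m n : ℕ} (h : HasClifford T n) (hmn : m ≤ n) :
    HasClifford T m :=
  let ⟨_, hA, hA_self⟩ := h
  .of_card_le hA hA_self (by simpa using hmn)

lemma HasChiralClifford.mono {m n : ℕ} (h : HasChiralClifford T n) (hmn : m ≤ n) :
    HasChiralClifford T m :=
  let ⟨_, Γ, hγ, hΓ⟩ := h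
  .of_card_le hγ Γ hΓ (by simpa using hmn)

lemma HasClifford.map {S : Type*} [Ring S] [StarRing S] [StarRing T] {n : ℕ}
    (h : HasClifford T n) (φ : T →+* S) (hφ : ∀ x, star (φ x) = φ (star x)) : HasClifford S n := by
  obtain ⟨A, hA, hA_self⟩ := h
  exact ⟨_, hA.map φ, fun j => (hφ _).trans (congrArg φ (hA_self j))⟩

lemma HasChiralClifford.map {S : Type*} [Ring S] {n : ℕ} (h : HasChiralClifford T n)
    (φ : T →+* S) : HasChiralClifford S n := by
  obtain ⟨γ, Γ, hγ, hΓ⟩ := h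
  exact ⟨_, Units.map φ.toMonoidHom Γ, hγ.map φ, fun j => by simpa using congrArg φ (hΓ j)⟩

end Ring

section Tensor

variable {κ : Type*} [Fintype κ] {R : Type*} [Ring R]

/-- Nested square matrices as square matrices indexed by `Fin m`. -/
noncomputable def flatten {μ : Type*} [Fintype μ] [DecidableEq μ] {m : ℕ}
    (hm : Fintype.card (κ × μ) = m) : Matrix κ κ (Matrix μ μ R) ≃+* Matrix (Fin m) (Fin m) R :=
  (compRingEquiv κ μ R).trans (reindexRingEquiv R (Fintype.equivFinOfCardEq hm))

lemma star_flatten {μ : Type*} [Fintype μ] [DecidableEq μ] [StarRing R] {m : ℕ}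
    (hm : Fintype.card (κ × μ) = m) (M : Matrix κ κ (Matrix μ μ R)) :
    star (flatten hm M) = flatten hm (star M) := rfl

variable [DecidableEq κ]

lemma star_scalar [StarRing R] (r : R) : star (scalar κ r) = scalar κ (star r) :=
  diagonal_conjTranspose _

variable [Algebra ℝ R] {n p : ℕ}

lemma IsClifford.tensor {A : Fin n → R} (hA : IsClifford A) {G : Fin (p + 1) → Matrix κ κ ℝ}
    (hG : IsClifford G) :
    IsClifford (Sum.elim (fun i => scalar κ (A i) * (algebraMap ℝ R).mapMatrix (G 0))
      fun k : Fin p => (algebraMap ℝ R).mapMatrix (G k.succ)) := by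
  let ψ : Matrix κ κ ℝ →+* Matrix κ κ R := (algebraMap ℝ R).mapMatrix
  have hψG := hG.map ψ
  have hφA := hA.map (scalar κ)
  refine (isClifford_mul_right (fun i => commute_scalar_mapMatrix _ _)
    (fun i => by rw [hφA.mul_self, hψG.mul_self, mul_one]) hφA.anticomm).sumElim
    (hψG.comp (Fin.succ_injective p)) fun i k => ?_
  exact mul_mul_eq_neg_of_commute (commute_scalar_mapMatrix _ _)
    (hψG.anticomm (Fin.succ_ne_zero k).symm)

lemma HasClifford.tensor [StarRing R] [StarModule ℝ R] (hR : HasClifford R n)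
    (hG : HasClifford (Matrix κ κ ℝ) (p + 1)) : HasClifford (Matrix κ κ R) (n + p) := by
  obtain ⟨A, hA, hA_self⟩ := hR
  obtain ⟨G, hG, hG_self⟩ := hG
  have scalar_self (i) : IsSelfAdjoint (scalar κ (A i)) :=
    (star_scalar _).trans (congrArg _ (hA_self i))
  have map_self (k) : IsSelfAdjoint ((algebraMap ℝ R).mapMatrix (G k)) :=
    (star_mapMatrix_algebraMap _).trans (congrArg _ (hG_self k))
  refine .of_card_le (hA.tensor hG) (Sum.forall.2 ⟨fun i => ?_, fun k => map_self k.succ⟩) (by simp)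
  exact ((scalar_self i).commute_iff (map_self 0)).1 (commute_scalar_mapMatrix _ _)

lemma HasChiralClifford.tensor (hR : HasChiralClifford R n)
    (hG : HasClifford (Matrix κ κ ℝ) (p + 1)) : HasChiralClifford (Matrix κ κ R) (n + p) := by
  obtain ⟨γ, Γ, hγ, hΓ⟩ := hR
  obtain ⟨G, hG, -⟩ := hG
  let ψ : Matrix κ κ ℝ →+* Matrix κ κ R := (algebraMap ℝ R).mapMatrix
  have comm (r M) : Commute (scalar κ r) (ψ M) := commute_scalar_mapMatrix r M
  have hψG := hG.map ψ
  let ω : (Matrix κ κ R)ˣ := ⟨ψ (G 0), ψ (G 0), hψG.mul_self 0, hψG.mul_self 0⟩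
  refine .of_card_le (hγ.tensor hG) (Units.map (scalar κ).toMonoidHom Γ * ω)
    (Sum.forall.2 ⟨fun i => ?_, fun k => ?_⟩) (by simp)
  · change scalar κ Γ.1 * ψ (G 0) * (scalar κ (γ i) * ψ (G 0)) =
      -(scalar κ (γ i) * ψ (G 0) * (scalar κ Γ.1 * ψ (G 0)))
    rw [(comm _ _).symm.mul_mul_mul_comm, (comm _ _).symm.mul_mul_mul_comm, ← map_mul, hΓ,
      map_neg, map_mul, neg_mul]
  · exact mul_mul_eq_neg_of_commute (comm _ _) (hψG.anticomm (Fin.succ_ne_zero k).symm)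

end Tensor

section Pauli

variable {ι : Type*} [Fintype ι]

/-- The Pauli string `X^a Z^b` of real matrices indexed by bit vectors, which translates by `a`
and multiplies by the character `(-1) ^ (b ⬝ᵥ ·)`. -/
def pauli (a b : ι → ZMod 2) : Matrix (ι → ZMod 2) (ι → ZMod 2) ℝ :=
  of fun x y => if y = x + a then (((-1 : ℤˣ) ^ (b ⬝ᵥ x) : ℤˣ) : ℤ) else 0

lemma pauli_zero : pauli (0 : ι → ZMod 2) 0 = 1 := by
  ext x y
  simp [pauli, one_apply, eq_comm]

lemma star_pauli (a b : ι → ZMod 2) : star (pauli a b) = (-1 : ℤˣ) ^ (b ⬝ᵥ a) • pauli a b := by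
  ext x y
  have eq_iff : x = y + a ↔ y = x + a := by
    rw [← sub_eq_iff_eq_add, ZModModule.sub_eq_add, eq_comm]
  simp only [pauli, star_apply, Matrix.smul_apply, of_apply, eq_iff]
  split_ifs with h
  · simp [h, dotProduct_add, uzpow_add, Units.smul_def, mul_comm]
  · simp

lemma isSelfAdjoint_pauli {a b : ι → ZMod 2} (h : b ⬝ᵥ a = 0) : IsSelfAdjoint (pauli a b) := by
  rw [IsSelfAdjoint, star_pauli, h, uzpow_zero, one_smul]

variable [DecidableEq ι]

lemma pauli_mul (a b c d : ι → ZMod 2) :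
    pauli a b * pauli c d = (-1 : ℤˣ) ^ (d ⬝ᵥ a) • pauli (a + c) (b + d) := by
  ext x y
  simp only [pauli, mul_apply, of_apply, Matrix.smul_apply, ite_mul, zero_mul, Finset.sum_ite_eq',
    Finset.mem_univ, if_true, add_assoc]
  split_ifs with h
  · simp [add_dotProduct, dotProduct_add, uzpow_add, Units.smul_def, mul_left_comm, mul_comm]
  · simp

lemma pauli_mul_self {a b : ι → ZMod 2} (h : b ⬝ᵥ a = 0) : pauli a b * pauli a b = 1 := by
  rw [pauli_mul, h, ZModModule.add_self, ZModModule.add_self, pauli_zero, uzpow_zero,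
    one_smul]

lemma pauli_mul_eq_neg {a b c d : ι → ZMod 2} (h : d ⬝ᵥ a = b ⬝ᵥ c + 1) :
    pauli a b * pauli c d = -(pauli c d * pauli a b) := by
  rw [pauli_mul, pauli_mul, h, uzpow_add, uzpow_one, mul_neg_one, add_comm c, add_comm d]
  exact neg_smul ((-1 : ℤˣ) ^ (b ⬝ᵥ c)).1 _

lemma isClifford_pauli {κ : Type*} {a b : κ → ι → ZMod 2} (h : ∀ j, b j ⬝ᵥ a j = 0)
    (hab : ∀ j k, j ≠ k → b k ⬝ᵥ a j = b j ⬝ᵥ a k + 1) :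
    IsClifford fun j => pauli (a j) (b j) where
  mul_self j := pauli_mul_self (h j)
  anticomm _ _ hjk := pauli_mul_eq_neg (hab _ _ hjk)

lemma pauli_one_mul_self : pauli (1 : Fin 1 → ZMod 2) 1 * pauli 1 1 = -1 := by
  rw [pauli_mul, ZModModule.add_self, pauli_zero, show (1 : Fin 1 → ZMod 2) ⬝ᵥ 1 = 1 by decide,
    uzpow_one, Units.neg_smul, one_smul]

lemma star_pauli_one : star (pauli (1 : Fin 1 → ZMod 2) 1) = -pauli 1 1 := by
  rw [star_pauli, show (1 : Fin 1 → ZMod 2) ⬝ᵥ 1 = 1 by decide, uzpow_one, Units.neg_smul,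
    one_smul]

lemma exists_isClifford_anticomm_pauli_one :
    ∃ G : Fin 2 → Matrix (Fin 1 → ZMod 2) (Fin 1 → ZMod 2) ℝ, IsClifford G ∧
      (∀ j, IsSelfAdjoint (G j)) ∧ ∀ j, pauli 1 1 * G j = -(G j * pauli 1 1) :=
  ⟨_, isClifford_pauli (a := !![1; 0]) (b := !![0; 1]) (by decide) (by decide),
    fun _ => isSelfAdjoint_pauli (by decide +revert),
    fun _ => pauli_mul_eq_neg (by decide +revert)⟩

lemma hasClifford_real_two :
    HasClifford (Matrix (Fin 1 → ZMod 2) (Fin 1 → ZMod 2) ℝ) 2 :=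
  let ⟨G, hG, hG_self, _⟩ := exists_isClifford_anticomm_pauli_one
  ⟨G, hG, hG_self⟩

lemma hasChiralClifford_real_two :
    HasChiralClifford (Matrix (Fin 1 → ZMod 2) (Fin 1 → ZMod 2) ℝ) 2 :=
  let ⟨G, hG, _, hYG⟩ := exists_isClifford_anticomm_pauli_one
  ⟨G, ⟨pauli 1 1, -pauli 1 1, by rw [mul_neg, pauli_one_mul_self, neg_neg],
    by rw [neg_mul, pauli_one_mul_self, neg_neg]⟩, hG, hYG⟩

-- With `Y = XZ`: `X` and `Z` on the first factor, then `Y` followed by `YXI`, `YZI`, their cyclic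
-- shifts and `YYY`.
lemma hasClifford_real_nine :
    HasClifford (Matrix (Fin 4 → ZMod 2) (Fin 4 → ZMod 2) ℝ) 9 :=
  ⟨_, isClifford_pauli
    (a := !![1, 0, 0, 0; 0, 0, 0, 0; 1, 1, 1, 0; 1, 0, 1, 1; 1, 1, 0, 1; 1, 1, 0, 0; 1, 0, 1, 0;
      1, 0, 0, 1; 1, 1, 1, 1])
    (b := !![0, 0, 0, 0; 1, 0, 0, 0; 1, 1, 0, 0; 1, 0, 1, 0; 1, 0, 0, 1; 1, 1, 1, 0; 1, 0, 1, 1;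
      1, 1, 0, 1; 1, 1, 1, 1])
    (by decide) (by decide), fun _ => isSelfAdjoint_pauli (by decide +revert)⟩

end Pauli

section Quaternion

/-- The imaginary units `i`, `j`, `k`. -/
def imaginaryUnit : Fin 3 → ℍ[ℝ] := ![⟨0, 1, 0, 0⟩, ⟨0, 0, 1, 0⟩, ⟨0, 0, 0, 1⟩]

lemma imaginaryUnit_mul_self (i : Fin 3) : imaginaryUnit i * imaginaryUnit i = -1 := by
  revert i
  simp [Fin.forall_fin_succ, imaginaryUnit, Quaternion.ext_iff]

lemma imaginaryUnit_anticomm {i j : Fin 3} (h : i ≠ j) :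
    imaginaryUnit i * imaginaryUnit j = -(imaginaryUnit j * imaginaryUnit i) := by
  revert i j
  simp [Fin.forall_fin_succ, imaginaryUnit, Quaternion.ext_iff]

lemma star_imaginaryUnit (i : Fin 3) : star (imaginaryUnit i) = -imaginaryUnit i := by
  revert i
  simp [Fin.forall_fin_succ, imaginaryUnit, Quaternion.ext_iff]

variable {κ : Type*} [Fintype κ] [DecidableEq κ] {Y : Matrix κ κ ℝ}

lemma isClifford_imaginaryUnit_mul (hY : Y * Y = -1) :
    IsClifford fun k => scalar κ (imaginaryUnit k) * (algebraMap ℝ ℍ[ℝ]).mapMatrix Y :=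
  isClifford_mul_right (fun _ => commute_scalar_mapMatrix _ _)
    (fun k => by simp only [← map_mul, imaginaryUnit_mul_self, hY, map_neg, map_one, neg_mul_neg,
      mul_one])
    fun i j h => by rw [← map_mul, imaginaryUnit_anticomm h, map_neg, map_mul]

lemma isSelfAdjoint_imaginaryUnit_mul (hY : star Y = -Y) (k : Fin 3) :
    IsSelfAdjoint (scalar κ (imaginaryUnit k) * (algebraMap ℝ ℍ[ℝ]).mapMatrix Y) := by
  rw [IsSelfAdjoint, star_mul, star_scalar, star_imaginaryUnit, star_mapMatrix_algebraMap, hY,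
    map_neg, map_neg, neg_mul_neg]
  exact (commute_scalar_mapMatrix _ _).symm

-- The products of the skew matrix `XZ` with `i`, `j` and `k`, and the Pauli matrices `X` and `Z`.
lemma hasClifford_quaternion_five : HasClifford (Matrix (Fin 2) (Fin 2) ℍ[ℝ]) 5 := by
  let ψ := (algebraMap ℝ ℍ[ℝ]).mapMatrix (m := Fin 1 → ZMod 2)
  obtain ⟨G, hG, hG_self, hYG⟩ := exists_isClifford_anticomm_pauli_one
  have hA := (isClifford_imaginaryUnit_mul pauli_one_mul_self).sumElim (hG.map ψ) fun k j =>
    mul_mul_eq_neg_of_commute (commute_scalar_mapMatrix _ _) <| by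
      rw [← map_mul, hYG, map_neg, map_mul]
  have h : HasClifford (Matrix (Fin 1 → ZMod 2) (Fin 1 → ZMod 2) ℍ[ℝ]) 5 :=
    .of_card_le hA (Sum.forall.2 ⟨isSelfAdjoint_imaginaryUnit_mul star_pauli_one, fun j =>
      (star_mapMatrix_algebraMap _).trans (congrArg _ (hG_self j))⟩) (by simp)
  exact h.map (reindexRingEquiv _ (Fintype.equivFinOfCardEq (by simp))).toRingHom fun _ => rfl

end Quaternion

section Towers

variable {R : Type*} [Ring R] [StarRing R]

lemma hasClifford_one (T : Type*) [Ring T] [StarRing T] : HasClifford T 1 :=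
  ⟨fun _ => 1, ⟨fun _ => mul_one 1, fun _ _ h => absurd (Subsingleton.elim _ _) h⟩,
    fun _ => .one T⟩

lemma HasClifford.copies {n m M : ℕ} (h : HasClifford (Matrix (Fin m) (Fin m) R) n) (c : ℕ)
    (hM : c * m = M) : HasClifford (Matrix (Fin M) (Fin M) R) n :=
  (h.map (scalar (Fin c)) star_scalar).map (flatten (by simpa)).toRingHom (star_flatten _)

variable [Algebra ℝ R] [StarModule ℝ R]

lemma HasClifford.add_one {n m M : ℕ} (h : HasClifford (Matrix (Fin m) (Fin m) R) n)
    (hM : 2 * m = M) : HasClifford (Matrix (Fin M) (Fin M) R) (n + 1) :=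
  (h.tensor hasClifford_real_two).map (flatten (by simpa)).toRingHom (star_flatten _)

lemma HasClifford.add_eight {n m M : ℕ} (h : HasClifford (Matrix (Fin m) (Fin m) R) n)
    (hM : 16 * m = M) : HasClifford (Matrix (Fin M) (Fin M) R) (n + 8) :=
  (h.tensor hasClifford_real_nine).map (flatten (by simpa)).toRingHom (star_flatten _)

lemma HasClifford.add_eight_mul {n m M : ℕ} (h : HasClifford (Matrix (Fin m) (Fin m) R) n)
    (k : ℕ) (hM : 2 ^ (4 * k) * m = M) : HasClifford (Matrix (Fin M) (Fin M) R) (n + 8 * k) := by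
  induction k generalizing M with
  | zero => exact (by simpa using hM : m = M) ▸ h
  | succ k ih => exact (ih rfl).add_eight (by rw [← hM]; ring)

end Towers

/-! ### The Hurwitz–Radon value -/

section Existence

variable {T : Type*} [Ring T] [StarRing T] [Algebra ℝ T] [StarModule ℝ T]

lemma HasClifford.exists_linearMap {n : ℕ} (h : HasClifford T n) :
    ∃ f : EuclideanSpace ℝ (Fin n) →ₗ[ℝ] T,
      ∀ v, IsSelfAdjoint (f v) ∧ f v ^ 2 = (‖v‖ ^ 2 : ℝ) • (1 : T) := by
  obtain ⟨A, hA, hA_self⟩ := h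
  refine ⟨Fintype.linearCombination ℝ A ∘ₗ (WithLp.linearEquiv 2 ℝ (Fin n → ℝ)).toLinearMap,
    fun v => ⟨?_, ?_⟩⟩
  · exact isSelfAdjoint_sum Finset.univ fun j _ => (IsSelfAdjoint.all (v j)).smul (hA_self j)
  · calc (∑ j, v j • A j) ^ 2 = (∑ j, A j * algebraMap ℝ T (v j)) ^ 2 := by
          simp only [Algebra.smul_def, Algebra.commutes]
      _ = ∑ j, algebraMap ℝ T (v j) * algebraMap ℝ T (v j) := by
          rw [sq, hA.sum_mul_mul_self (fun j k => (Algebra.commutes _ _).symm)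
            fun j k => Algebra.commutes _ _]
      _ = (‖v‖ ^ 2 : ℝ) • (1 : T) := by
          rw [EuclideanSpace.real_norm_sq_eq, ← Algebra.algebraMap_eq_smul_one, map_sum]
          simp only [sq, map_mul]

lemma isUnit_of_sq_eq_smul_one {T : Type*} [Ring T] [Algebra ℝ T] {x : T} {c : ℝ} (hc : c ≠ 0)
    (hx : x ^ 2 = c • (1 : T)) : IsUnit x := by
  rw [← isUnit_pow_iff two_ne_zero, hx, ← Algebra.algebraMap_eq_smul_one]
  exact hc.isUnit.map _

end Existence

section Divisibility

theorem two_pow_dvd_card_mul_card {κ ι E : Type*} [Fintype κ] [DecidableEq κ] [Fintype ι]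
    [DecidableEq ι] [AddCommGroup E] [Module ℝ E] {n : ℕ} (hκ : HasChiralClifford (Matrix κ κ ℝ) n)
    (hn : n ≤ finrank ℝ E) {f : E →ₗ[ℝ] Matrix ι ι ℍ[ℝ]} (hf_self : ∀ v, IsSelfAdjoint (f v))
    (hf_unit : ∀ v, v ≠ 0 → IsUnit (f v)) : 2 ^ n ∣ Fintype.card κ * Fintype.card ι := by
  obtain ⟨v, hv⟩ := exists_linearIndependent_of_le_finrank hn
  obtain ⟨γ, Γ, hγ, hΓ⟩ := hκ
  let ψ : Matrix κ κ ℝ →+* Matrix κ κ (Matrix ι ι ℍ[ℝ]) := (algebraMap ℝ _).mapMatrix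
  let c := compAlgEquiv κ ι ℍ[ℝ] ℝ
  let φ : Matrix κ κ ℝ →+* Matrix (κ × ι) (κ × ι) ℍ[ℝ] := c.toAlgHom.toRingHom.comp ψ
  let σ : Matrix ι ι ℍ[ℝ] →ₐ[ℝ] Matrix (κ × ι) (κ × ι) ℍ[ℝ] :=
    c.toAlgHom.comp (scalarAlgHom κ ℝ)
  have comm (M x) : Commute (φ M) (σ x) := (commute_scalar_mapMatrix x M).symm.map c
  rw [← Fintype.card_prod]
  refine two_pow_dvd_card (γ := fun j => φ (γ j)) (A := fun j => σ (f (v j)))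
    (Γ := Units.map φ.toMonoidHom Γ) (hγ.map φ) (fun j => ?_) (fun j k => comm _ _)
    (fun l hl => ?_) (fun j => ?_) fun j => comm _ _
  · exact congrArg c ((star_scalar _).trans (congrArg (scalar κ) (hf_self (v j))))
  · have sum_ne_zero : ∑ j, l j • v j ≠ 0 :=
      fun h => hl (funext (Fintype.linearIndependent_iff.1 hv l h))
    simpa only [map_sum, map_smul] using (hf_unit _ sum_ne_zero).map σ
  · simpa using congrArg φ (hΓ j)

end Divisibility

section Value

lemma exists_eq_two_pow_mul_odd {N : ℕ} (hN : N ≠ 0) :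
    ∃ (k : ℕ) (r : Fin 4) (m : ℕ), Odd m ∧ 2 ^ (4 * k + r) * m = N := by
  obtain ⟨ν, m, hm, rfl⟩ := Nat.exists_eq_two_pow_mul_odd hN
  exact ⟨ν / 4, Fin.ofNat 4 ν, m, hm, by rw [Fin.val_ofNat, Nat.div_add_mod]⟩

lemma hasClifford_real (k : ℕ) :
    HasClifford (Matrix (Fin (2 ^ (4 * k))) (Fin (2 ^ (4 * k))) ℝ) (8 * k + 1) :=
  add_comm 1 (8 * k) ▸ (hasClifford_one (Matrix (Fin 1) (Fin 1) ℝ)).add_eight_mul k (mul_one _)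

lemma hasChiralClifford_real_eight_mul (k : ℕ) :
    HasChiralClifford (Matrix (Fin (2 ^ (4 * k))) (Fin (2 ^ (4 * k))) ℝ) (8 * k) := by
  have h : HasChiralClifford ℝ 0 := ⟨finZeroElim, 1, ⟨finZeroElim, finZeroElim⟩, finZeroElim⟩
  exact zero_add (8 * k) ▸ h.tensor (hasClifford_real k)

lemma hasChiralClifford_real_eight_mul_add_two (k : ℕ) :
    HasChiralClifford (Matrix (Fin (2 ^ (4 * k + 1))) (Fin (2 ^ (4 * k + 1))) ℝ) (8 * k + 2) :=
  add_comm 2 (8 * k) ▸ (hasChiralClifford_real_two.tensor (hasClifford_real k)).map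
    (flatten (by simp [pow_succ])).toRingHom

/-- The number `ρ(2 ^ r / 4) + 5`, which is the largest size of a family of pairwise anticommuting
Hermitian square roots of `1` in `M(2 ^ r, ℍ)`. -/
def quaternionicRadon : Fin 4 → ℕ := ![1, 5, 6, 7]

lemma hasClifford_quaternion (k : ℕ) (r : Fin 4) {m N : ℕ} (hN : 2 ^ (4 * k + r) * m = N) :
    HasClifford (Matrix (Fin N) (Fin N) ℍ[ℝ]) (8 * k + quaternionicRadon r) := by
  have base : HasClifford (Matrix (Fin (2 ^ r.1)) (Fin (2 ^ r.1)) ℍ[ℝ]) (quaternionicRadon r) := by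
    fin_cases r
    · exact hasClifford_one _
    · exact hasClifford_quaternion_five
    · exact hasClifford_quaternion_five.add_one (by norm_num)
    · exact (hasClifford_quaternion_five.add_one rfl).add_one (by norm_num)
  rw [add_comm]
  exact (base.add_eight_mul k rfl).copies m (by rw [← hN, pow_add, mul_comm])

lemma hrRho_two_pow_mul_div_four (k : ℕ) (r : Fin 4) {m : ℕ} (hm : Odd m) :
    hrRho ((2 ^ (4 * k + r) * m : ℕ) / 4) + 5 = (8 * k + quaternionicRadon r : ℕ) := by
  have val : padicValRat 2 ((2 ^ (4 * k + r) * m : ℕ) / 4) = r - 2 + 4 * k := by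
    have val_two : padicValRat 2 (2 : ℚ) = 1 := padicValRat.self one_lt_two
    have val_m : padicValRat 2 (m : ℚ) = 0 := by
      rw [padicValRat.of_nat, padicValNat.eq_zero_of_not_dvd hm.not_two_dvd_nat, Nat.cast_zero]
    have hm0 : (m : ℚ) ≠ 0 := Nat.cast_ne_zero.2 hm.pos.ne'
    push_cast
    rw [padicValRat.div (by positivity) four_ne_zero, padicValRat.mul (by positivity) hm0, val_m,
      show (4 : ℚ) = 2 ^ 2 by norm_num, padicValRat.pow, padicValRat.pow, val_two]
    push_cast
    ring
  have residue : ∀ r : Fin 4, 8 * (((r : ℤ) - 2) / 4) + 2 ^ (((r : ℤ) - 2) % 4).toNat + 5 =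
      quaternionicRadon r := by decide
  rw [hrRho, val, Int.add_mul_ediv_left _ _ four_ne_zero,
    Int.add_mul_emod_self_left, Nat.cast_add, ← residue]
  push_cast
  ring

theorem finrank_le_of_isUnit {E : Type*} [AddCommGroup E] [Module ℝ E] {a ν m n N : ℕ}
    (hC : HasChiralClifford (Matrix (Fin (2 ^ a)) (Fin (2 ^ a)) ℝ) n) (hn : a + ν < n)
    (hm : Odd m) (hN : 2 ^ ν * m = N) {f : E →ₗ[ℝ] Matrix (Fin N) (Fin N) ℍ[ℝ]}
    (hf_self : ∀ v, IsSelfAdjoint (f v)) (hf_unit : ∀ v, v ≠ 0 → IsUnit (f v)) :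
    finrank ℝ E ≤ a + ν := by
  by_contra! hE
  have dvd := two_pow_dvd_card_mul_card (hC.mono hn) hE hf_self hf_unit
  rw [Fintype.card_fin, Fintype.card_fin, ← hN, ← mul_assoc, ← pow_add, pow_succ,
    Nat.mul_dvd_mul_iff_left (by positivity)] at dvd
  exact hm.not_two_dvd_nat dvd

theorem finrank_le_eight_mul_add {E : Type*} [AddCommGroup E] [Module ℝ E] (k : ℕ) (r : Fin 4)
    {m N : ℕ} (hm : Odd m) (hN : 2 ^ (4 * k + r) * m = N) {f : E →ₗ[ℝ] Matrix (Fin N) (Fin N) ℍ[ℝ]}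
    (hf_self : ∀ v, IsSelfAdjoint (f v)) (hf_unit : ∀ v, v ≠ 0 → IsUnit (f v)) :
    finrank ℝ E ≤ 8 * k + quaternionicRadon r := by
  obtain rfl | hr := eq_or_ne r 0
  · have le := finrank_le_of_isUnit (hasChiralClifford_real_eight_mul_add_two k)
      (by rw [Fin.val_zero]; lia) hm hN hf_self hf_unit
    exact le.trans (by rw [show quaternionicRadon 0 = 1 from rfl, Fin.val_zero]; lia)
  · have radon_eq : ∀ r : Fin 4, r ≠ 0 → quaternionicRadon r = 4 + r := by decide
    have le := finrank_le_of_isUnit (hasChiralClifford_real_eight_mul (k + 1)) (by lia) hm hN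
      hf_self hf_unit
    exact le.trans (by rw [radon_eq r hr]; lia)

end Value

end HurwitzRadon

/-- Entry `𝔤 = 𝔤𝔩(N,ℍ)` of the Hurwitz–Radon value theorem:
`ρ⁽¹⁾ = ρ⁽²⁾ = ρ(N/4) + 5`, the Adams–Lax–Phillips number `ℍ_h(N)`. -/
theorem hurwitzRadon_gl_N_H (N : ℕ) (hN : 1 ≤ N) (n : ℕ) :
    ((∃ f : EuclideanSpace ℝ (Fin n) →ₗ[ℝ] Matrix (Fin N) (Fin N) (Quaternion ℝ),
        ∀ v, (f v)ᴴ = f v ∧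
          (f v) ^ 2 = (‖v‖ ^ 2 : ℝ) • (1 : Matrix (Fin N) (Fin N) (Quaternion ℝ))) ↔
      (∃ f : EuclideanSpace ℝ (Fin n) →ₗ[ℝ] Matrix (Fin N) (Fin N) (Quaternion ℝ),
        (∀ v, (f v)ᴴ = f v) ∧ ∀ v, v ≠ 0 → IsUnit (f v))) ∧
    ((∃ f : EuclideanSpace ℝ (Fin n) →ₗ[ℝ] Matrix (Fin N) (Fin N) (Quaternion ℝ),
        (∀ v, (f v)ᴴ = f v) ∧ ∀ v, v ≠ 0 → IsUnit (f v)) ↔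
      (n : ℤ) ≤ hrRho ((N : ℚ) / 4) + 5) := by
  obtain ⟨k, r, m, hm, hN_eq⟩ :=
    HurwitzRadon.exists_eq_two_pow_mul_odd (Nat.one_le_iff_ne_zero.1 hN)
  rw [← hN_eq, HurwitzRadon.hrRho_two_pow_mul_div_four k r hm, Nat.cast_le, hN_eq]
  let L := EuclideanSpace ℝ (Fin n) →ₗ[ℝ] Matrix (Fin N) (Fin N) (Quaternion ℝ)
  have isUnit_of_sq : (∃ f : L, ∀ v, (f v)ᴴ = f v ∧ f v ^ 2 = (‖v‖ ^ 2 : ℝ) • 1) →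
      ∃ f : L, (∀ v, (f v)ᴴ = f v) ∧ ∀ v, v ≠ 0 → IsUnit (f v) := by
    rintro ⟨f, hf⟩
    exact ⟨f, fun v => (hf v).1, fun v hv => HurwitzRadon.isUnit_of_sq_eq_smul_one
      (pow_ne_zero 2 (norm_ne_zero_iff.2 hv)) (hf v).2⟩
  have le_of_isUnit : (∃ f : L, (∀ v, (f v)ᴴ = f v) ∧ ∀ v, v ≠ 0 → IsUnit (f v)) →
      n ≤ 8 * k + HurwitzRadon.quaternionicRadon r := by
    rintro ⟨f, hf_self, hf_unit⟩
    simpa using HurwitzRadon.finrank_le_eight_mul_add k r hm hN_eq hf_self hf_unit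
  have sq_of_le (h : n ≤ 8 * k + HurwitzRadon.quaternionicRadon r) :=
    ((HurwitzRadon.hasClifford_quaternion k r hN_eq).mono h).exists_linearMap
  exact ⟨⟨isUnit_of_sq, sq_of_le ∘ le_of_isUnit⟩, le_of_isUnit, isUnit_of_sq ∘ sq_of_le⟩
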